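/- arXiv:1610.06617 — 2 statements merged into one kernel-verified Lean document; each statement's English description precedes it below -/
import Mathlib

section
/- Let K be an algebraically closed field of characteristic 0 and let n, m be positive integers. The ring of matrix invariants S(n,m) = K[Mat_{n,n}^m]^{GL_n} is generated by its homogeneous elements of degree at most n^2. -/
open MvPolynomial Matrix

/-- Coordinate functions of an `m`-tuple of `n × n` matrices. -/
def matCoords {K : Type} [Field K] {n m : ℕ} (X : Fin m → Matrix (Fin n) (Fin n) K) :
    Fin m × Fin n × Fin n → K :=
  fun p => X p.1 p.2.1 p.2.2

/-- The ring of matrix semi-invariants `R(n,m) = K[Mat_{n,n}^m]^{SL_n × SL_n}`, where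
`(A,B)` acts by `(X_1, …, X_m) ↦ (A X_1 B⁻¹, …, A X_m B⁻¹)`. -/
noncomputable def matrixSemiInvariants (K : Type) [Field K] (n m : ℕ) :
    Subalgebra K (MvPolynomial (Fin m × Fin n × Fin n) K) :=
  ⨅ (A : SpecialLinearGroup (Fin n) K) (B : SpecialLinearGroup (Fin n) K)
    (X : Fin m → Matrix (Fin n) (Fin n) K),
      AlgHom.equalizer
        (aeval (matCoords fun i => A.val * X i * (B⁻¹).val))
        (aeval (matCoords X))

/-- The ring of matrix invariants `S(n,m) = K[Mat_{n,n}^m]^{GL_n}`, where `A` acts by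
simultaneous conjugation. -/
noncomputable def matrixInvariants (K : Type) [Field K] (n m : ℕ) :
    Subalgebra K (MvPolynomial (Fin m × Fin n × Fin n) K) :=
  ⨅ (A : GeneralLinearGroup (Fin n) K) (X : Fin m → Matrix (Fin n) (Fin n) K),
      AlgHom.equalizer
        (aeval (matCoords fun i => A.val * X i * (A⁻¹).val))
        (aeval (matCoords X))

/-!
A homogeneous invariant `f` of degree `d` is the restriction to the diagonal of a symmetric tensor.
Cut along the indices of the matrices, this tensor becomes a family of endomorphisms of `V^{⊗d}`,
`V = Kⁿ`, and invariance of `f` says that they commute with all `g^{⊗d}`. By Schur–Weyl duality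
they are combinations of the permutations of the factors, so `f` is a combination of the products
of traces `permTrace σ`, one factor for each cycle of `σ`.

It remains to split `permTrace σ` when `d > n²` and `σ` is a full cycle. The antisymmetrizer
`∑ sign σ • σ` acts as zero on `(V ⊗ V)^{⊗d}`, because `dim (V ⊗ V) < d`, and `σ` acts there as
`P σ ⊗ P σ`, where `P σ` is its action on `V^{⊗d}`. Hence `∑ sign σ * φ (P σ) ^ 2 = 0` for every
linear functional `φ`. If `φ` vanishes on the permutations that are not full cycles, all remaining
terms have the same sign, so over `ℚ` they vanish. Thus each full cycle is, on `V^{⊗d}`, a rational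
combination of permutations that are not full cycles, whose traces are products of traces of lower
degree.
-/

section PiKronecker

variable {α l m n R S : Type*} [Fintype α] [CommRing R] [CommRing S]

/-- The tensor product `⨂ₖ Z k` of a finite family of matrices, on multi-indices. -/
def piKronecker (Z : α → Matrix m n R) : Matrix (α → m) (α → n) R :=
  of fun I J => ∏ k, Z k (I k) (J k)

theorem piKronecker_apply (Z : α → Matrix m n R) (I : α → m) (J : α → n) :
    piKronecker Z I J = ∏ k, Z k (I k) (J k) :=
  rfl

theorem piKronecker_mul [DecidableEq α] [Fintype m] (Y : α → Matrix l m R) (Z : α → Matrix m n R) :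
    piKronecker (fun k => Y k * Z k) = piKronecker Y * piKronecker Z := by
  ext I J
  simp only [piKronecker_apply, Matrix.mul_apply, Fintype.prod_sum, Finset.prod_mul_distrib]

theorem piKronecker_one [DecidableEq n] :
    piKronecker (fun _ : α => (1 : Matrix n n R)) = 1 := by
  ext I J
  simp [piKronecker_apply, Matrix.one_apply, Finset.prod_ite_zero, _root_.funext_iff]

variable [DecidableEq α] [Fintype n] [DecidableEq n]

variable (R n) in
/-- The permutation of the factors of `(Rⁿ)^{⊗α}`, as a matrix. The convention
`(tensorPerm n R σ *ᵥ v) I = v (I ∘ σ)` makes it multiplicative in `σ`. -/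
def tensorPerm : Equiv.Perm α →* Matrix (α → n) (α → n) R where
  toFun σ := of fun I J => if I ∘ σ = J then 1 else 0
  map_one' := by
    ext I J
    simp [Matrix.one_apply]
  map_mul' σ τ := by
    ext I J
    rw [Matrix.mul_apply, Finset.sum_eq_single (I ∘ σ)] <;>
      simp +contextual [Function.comp_assoc, eq_comm]

theorem tensorPerm_apply (σ : Equiv.Perm α) (I J : α → n) :
    tensorPerm n R σ I J = if I ∘ σ = J then 1 else 0 :=
  rfl

theorem tensorPerm_map (f : R →+* S) (σ : Equiv.Perm α) :
    (tensorPerm n R σ).map f = tensorPerm n S σ := by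
  ext I J
  simp [tensorPerm_apply, apply_ite f]

theorem tensorPerm_mul_apply {ν : Type*} (σ : Equiv.Perm α) (M : Matrix (α → n) ν R)
    (I : α → n) (j : ν) : (tensorPerm n R σ * M) I j = M (I ∘ σ) j := by
  simp [Matrix.mul_apply, tensorPerm_apply]

theorem mul_tensorPerm_apply {ν : Type*} (σ : Equiv.Perm α) (M : Matrix ν (α → n) R)
    (i : ν) (J : α → n) : (M * tensorPerm n R σ) i (J ∘ σ) = M i J := by
  simp [Matrix.mul_apply, tensorPerm_apply, σ.surjective.right_cancellable]

theorem tensorPerm_mul_piKronecker (σ : Equiv.Perm α) (Z : α → Matrix n n R) :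
    tensorPerm n R σ * piKronecker (Z ∘ σ) = piKronecker Z * tensorPerm n R σ := by
  ext I J
  obtain ⟨J, rfl⟩ : ∃ J', J' ∘ σ = J := ⟨J ∘ σ.symm, by ext; simp⟩
  rw [tensorPerm_mul_apply, mul_tensorPerm_apply]
  exact Equiv.prod_comp σ fun k => Z k (I k) (J k)

end PiKronecker

section PermTrace

variable {α n R S : Type*} [Fintype α] [DecidableEq α] [Fintype n] [DecidableEq n]
  [CommRing R] [CommRing S]

/-- The product, over the cycles of `σ`, of the trace of the product of the matrices `Z k` along
the cycle; fixed points count as cycles. It is encoded as the trace of `⨂ₖ Z k` composed with the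
permutation `σ` of the tensor factors. -/
def permTrace (σ : Equiv.Perm α) (Z : α → Matrix n n R) : R :=
  trace (tensorPerm n R σ * piKronecker Z)

theorem permTrace_eq_sum (σ : Equiv.Perm α) (Z : α → Matrix n n R) :
    permTrace σ Z = ∑ J : α → n, ∏ k, Z k (J (σ k)) (J k) := by
  simp [permTrace, trace, tensorPerm_mul_apply, piKronecker_apply]

theorem map_permTrace (f : R →+* S) (σ : Equiv.Perm α) (Z : α → Matrix n n R) :
    f (permTrace σ Z) = permTrace σ fun k => (Z k).map f := by
  simp [permTrace_eq_sum]

theorem permTrace_mul_mul_of_mul_eq_one (σ : Equiv.Perm α) (Z : α → Matrix n n R)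
    {g h : Matrix n n R} (hgh : h * g = 1) :
    permTrace σ (fun k => g * Z k * h) = permTrace σ Z := by
  have hcomm : tensorPerm n R σ * piKronecker (fun _ => h) =
      piKronecker (fun _ => h) * tensorPerm n R σ := tensorPerm_mul_piKronecker σ fun _ => h
  calc permTrace σ (fun k => g * Z k * h)
      = trace (tensorPerm n R σ * piKronecker (fun _ => g) * piKronecker Z *
          piKronecker fun _ => h) := by
        simp only [permTrace, piKronecker_mul, mul_assoc]
    _ = trace (piKronecker (fun _ => h) * tensorPerm n R σ * piKronecker (fun _ => g) *
          piKronecker Z) := by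
        rw [trace_mul_comm]
        simp only [mul_assoc]
    _ = permTrace σ Z := by
        rw [← hcomm, mul_assoc (tensorPerm n R σ), ← piKronecker_mul, hgh, piKronecker_one,
          mul_one, permTrace]

theorem permTrace_eq_mul_subtypePerm (σ : Equiv.Perm α) (Z : α → Matrix n n R) (p : α → Prop)
    [DecidablePred p] (hp : ∀ x, p (σ x) ↔ p x) :
    permTrace σ Z = permTrace (σ.subtypePerm hp) (fun k => Z k) *
      permTrace (σ.subtypePerm (p := fun x => ¬ p x) fun x => not_congr (hp x))
        (fun k => Z k) := by
  rw [permTrace_eq_sum, permTrace_eq_sum, permTrace_eq_sum, Finset.sum_mul_sum,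
    ← Fintype.sum_prod_type', ← Equiv.sum_comp (Equiv.piEquivPiSubtypeProd p fun _ => n)]
  refine Finset.sum_congr rfl fun J _ => ?_
  rw [← Fintype.prod_subtype_mul_prod_subtype p]
  rfl

theorem trace_map_mul_piKronecker_mem_span [Algebra R S] {s : Set (Equiv.Perm α)}
    {M : Matrix (α → n) (α → n) R} (hM : M ∈ Submodule.span R (tensorPerm n R '' s))
    (Z : α → Matrix n n S) :
    trace (M.map (algebraMap R S) * piKronecker Z) ∈ Submodule.span R ((permTrace · Z) '' s) := by
  let φ : Matrix (α → n) (α → n) R →ₗ[R] S :=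
    traceLinearMap _ R S ∘ₗ LinearMap.mulRight R (piKronecker Z) ∘ₗ
      (Algebra.linearMap R S).mapMatrix
  have hφ : ∀ σ : Equiv.Perm α, φ (tensorPerm n R σ) = permTrace σ Z := by
    intro σ
    rw [permTrace, ← tensorPerm_map (algebraMap R S)]
    rfl
  have hspan := Submodule.mem_map_of_mem (f := φ) hM
  rw [Submodule.map_span, Set.image_image] at hspan
  simp only [hφ] at hspan
  exact hspan

end PermTrace

section TraceIdentity

variable {α n : Type*} [Fintype α] [DecidableEq α] [Fintype n] [DecidableEq n]

theorem sign_of_isCycleOn_univ [Nonempty α] {σ : Equiv.Perm α} (hσ : σ.IsCycleOn Set.univ) :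
    Equiv.Perm.sign σ = -(-1) ^ Fintype.card α := by
  cases subsingleton_or_nontrivial α
  · have hcard : Fintype.card α = 1 :=
      le_antisymm (Fintype.card_le_one_iff_subsingleton.mpr ‹_›) Fintype.card_pos
    simp [Subsingleton.elim σ 1, hcard]
  · have hne : ∀ a, σ a ≠ a := fun a => hσ.apply_ne Set.nontrivial_univ (Set.mem_univ a)
    have hcycle : σ.IsCycle := Equiv.Perm.isCycle_iff_exists_isCycleOn.mpr
      ⟨_, Set.nontrivial_univ, hσ, fun _ _ => Set.mem_univ _⟩
    have hsupport : σ.support = Finset.univ := by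
      ext a
      simp [hne a]
    rw [hcycle.sign, hsupport, Finset.card_univ]

theorem sum_sign_mul_tensorPerm_apply_eq_zero {R : Type*} [CommRing R]
    (hcard : Fintype.card n < Fintype.card α) (I J : α → n) :
    ∑ σ : Equiv.Perm α, ((Equiv.Perm.sign σ : ℤ) : R) * tensorPerm n R σ I J = 0 := by
  obtain ⟨a, b, hab, hI⟩ := Fintype.exists_ne_map_eq_of_card_lt I hcard
  calc ∑ σ : Equiv.Perm α, ((Equiv.Perm.sign σ : ℤ) : R) * tensorPerm n R σ I J
      = det (of fun i k => if I i = J k then (1 : R) else 0) := by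
        simp [det_apply', tensorPerm_apply, Finset.prod_ite_zero, _root_.funext_iff]
    _ = 0 := det_zero_of_row_eq hab (by ext; simp [hI])

theorem tensorPerm_mul_tensorPerm_apply {R : Type*} [CommRing R] (σ : Equiv.Perm α)
    (I J I' J' : α → n) :
    tensorPerm n R σ I J * tensorPerm n R σ I' J' =
      tensorPerm (n × n) R σ (fun k => (I k, I' k)) fun k => (J k, J' k) := by
  simp [tensorPerm_apply, ← ite_and, _root_.funext_iff, forall_and, and_comm]

theorem sum_sign_mul_sq_tensorPerm_eq_zero {R : Type*} [CommRing R]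
    (hcard : Fintype.card n ^ 2 < Fintype.card α)
    (φ : Matrix (α → n) (α → n) R →ₗ[R] R) :
    ∑ σ : Equiv.Perm α, ((Equiv.Perm.sign σ : ℤ) : R) * φ (tensorPerm n R σ) ^ 2 = 0 := by
  have hcard' : Fintype.card (n × n) < Fintype.card α := by
    rwa [Fintype.card_prod, ← sq]
  have happly : ∀ I J : α → n, ∑ σ : Equiv.Perm α,
      ((Equiv.Perm.sign σ : ℤ) : R) * tensorPerm n R σ I J * φ (tensorPerm n R σ) = 0 := by
    intro I J
    have hzero : ∑ σ : Equiv.Perm α,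
        (((Equiv.Perm.sign σ : ℤ) : R) * tensorPerm n R σ I J) • tensorPerm n R σ = 0 := by
      ext I' J'
      simpa [Matrix.sum_apply, mul_assoc, tensorPerm_mul_tensorPerm_apply] using
        sum_sign_mul_tensorPerm_apply_eq_zero hcard' _ _
    simpa using congrArg φ hzero
  have hzero : ∑ σ : Equiv.Perm α,
      (((Equiv.Perm.sign σ : ℤ) : R) * φ (tensorPerm n R σ)) • tensorPerm n R σ = 0 := by
    ext I J
    simpa [Matrix.sum_apply, mul_right_comm] using happly I J
  simpa [sq, mul_assoc] using congrArg φ hzero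

theorem tensorPerm_mem_span_of_orderedField {k : Type*} [Field k] [LinearOrder k]
    [IsStrictOrderedRing k] (hcard : Fintype.card n ^ 2 < Fintype.card α) (c : Equiv.Perm α) :
    tensorPerm n k c ∈
      Submodule.span k (tensorPerm n k '' {σ : Equiv.Perm α | ¬ σ.IsCycleOn Set.univ}) := by
  by_contra hc
  obtain ⟨φ, hφc, hker⟩ := Submodule.exists_le_ker_of_notMem hc
  have : Nonempty α := Fintype.card_pos_iff.mp (Nat.zero_le _ |>.trans_lt hcard)
  have hsign : ∀ σ : Equiv.Perm α, ((Equiv.Perm.sign σ : ℤ) : k) * φ (tensorPerm n k σ) ^ 2 =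
      -(-1) ^ Fintype.card α * φ (tensorPerm n k σ) ^ 2 := by
    intro σ
    by_cases hσ : σ.IsCycleOn Set.univ
    · simp [sign_of_isCycleOn_univ hσ]
    · have hφσ : φ (tensorPerm n k σ) = 0 := hker (Submodule.subset_span ⟨σ, hσ, rfl⟩)
      simp [hφσ]
  have hsum : ∑ σ : Equiv.Perm α, φ (tensorPerm n k σ) ^ 2 = 0 := by
    have := sum_sign_mul_sq_tensorPerm_eq_zero hcard φ
    simpa [hsign, ← Finset.mul_sum] using this
  rw [Finset.sum_eq_zero_iff_of_nonneg fun _ _ => sq_nonneg _] at hsum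
  exact hφc (pow_eq_zero_iff two_ne_zero |>.mp (hsum c (Finset.mem_univ c)))

theorem tensorPerm_mem_span_of_sq_card_lt {K : Type*} [Field K] [CharZero K]
    (hcard : Fintype.card n ^ 2 < Fintype.card α) (c : Equiv.Perm α) :
    tensorPerm n K c ∈
      Submodule.span K (tensorPerm n K '' {σ : Equiv.Perm α | ¬ σ.IsCycleOn Set.univ}) := by
  have hmap : ∀ σ : Equiv.Perm α,
      (Algebra.linearMap ℚ K).mapMatrix (tensorPerm n ℚ σ) = tensorPerm n K σ :=
    tensorPerm_map (algebraMap ℚ K)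
  have hspan := Submodule.mem_map_of_mem (f := (Algebra.linearMap ℚ K).mapMatrix)
    (tensorPerm_mem_span_of_orderedField (k := ℚ) hcard c)
  rw [Submodule.map_span, Set.image_image] at hspan
  simp only [hmap] at hspan
  exact Submodule.span_le_restrictScalars ℚ K _ hspan

end TraceIdentity

section Generation

variable {K R n : Type*} [Field K] [CharZero K] [CommRing R] [Algebra K R]
  [Fintype n] [DecidableEq n]

theorem permTrace_mem_span_of_sq_card_lt {α : Type*} [Fintype α] [DecidableEq α]
    (hcard : Fintype.card n ^ 2 < Fintype.card α) (c : Equiv.Perm α) (Z : α → Matrix n n R) :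
    permTrace c Z ∈
      Submodule.span K ((permTrace · Z) '' {σ : Equiv.Perm α | ¬ σ.IsCycleOn Set.univ}) := by
  have hspan := trace_map_mul_piKronecker_mem_span
    (tensorPerm_mem_span_of_sq_card_lt (K := K) hcard c) Z
  rwa [tensorPerm_map] at hspan

theorem exists_not_sameCycle_of_not_isCycleOn_univ {α : Type*} {σ : Equiv.Perm α}
    (hσ : ¬ σ.IsCycleOn Set.univ) : ∃ x y, ¬ σ.SameCycle x y := by
  contrapose! hσ
  exact ⟨by simpa using σ.bijective, fun x _ y _ => hσ x y⟩

universe u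

theorem permTrace_mem_of_forall_card_le {ι : Type*} {X : ι → Matrix n n R} {S : Subalgebra K R}
    (hS : ∀ (α : Type u) [Fintype α] [DecidableEq α] (σ : Equiv.Perm α) (w : α → ι),
      Fintype.card α ≤ Fintype.card n ^ 2 → permTrace σ (fun k => X (w k)) ∈ S)
    (α : Type u) [Fintype α] [DecidableEq α] (σ : Equiv.Perm α) (w : α → ι) :
    permTrace σ (fun k => X (w k)) ∈ S := by
  induction hN : Fintype.card α using Nat.strong_induction_on generalizing α with
  | _ N ih =>
    rcases le_or_gt (Fintype.card α) (Fintype.card n ^ 2) with hle | hlt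
    · exact hS α σ w hle
    suffices hspan : Submodule.span K ((permTrace · fun k => X (w k)) ''
        {τ : Equiv.Perm α | ¬ τ.IsCycleOn Set.univ}) ≤ Subalgebra.toSubmodule S from
      hspan (permTrace_mem_span_of_sq_card_lt hlt σ fun k => X (w k))
    rw [Submodule.span_le]
    rintro _ ⟨τ, hτ, rfl⟩
    obtain ⟨x, y, hxy⟩ := exists_not_sameCycle_of_not_isCycleOn_univ hτ
    have hcycle : ∀ z, τ.SameCycle x (τ z) ↔ τ.SameCycle x z := fun _ =>
      Equiv.Perm.sameCycle_apply_right
    simp only [permTrace_eq_mul_subtypePerm τ _ (τ.SameCycle x) hcycle]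
    have hlt_same : Fintype.card {z // τ.SameCycle x z} < N :=
      hN ▸ Fintype.card_subtype_lt hxy
    have hlt_other : Fintype.card {z // ¬ τ.SameCycle x z} < N :=
      hN ▸ Fintype.card_subtype_lt (x := x) (not_not.mpr (.refl τ x))
    exact S.mul_mem (ih _ hlt_same {z // τ.SameCycle x z} _ (fun k => w k.1) rfl)
      (ih _ hlt_other {z // ¬ τ.SameCycle x z} _ (fun k => w k.1) rfl)

end Generation

section Content

variable {α ι : Type*} [Fintype α]

/-- The content of a multi-index: how often each index occurs in it. It is the exponent of the
monomial `∏ k, X (t k)`. -/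
noncomputable def content (t : α → ι) : ι →₀ ℕ :=
  ∑ k, Finsupp.single (t k) 1

theorem content_comp_perm (t : α → ι) (σ : Equiv.Perm α) : content (t ∘ σ) = content t :=
  Equiv.sum_comp σ fun k => Finsupp.single (t k) 1

theorem content_apply [DecidableEq ι] (t : α → ι) (i : ι) :
    content t i = Fintype.card {k // t k = i} := by
  simp [content, Finsupp.finsetSum_apply, Finsupp.single_apply, Fintype.card_subtype]

theorem exists_eq_comp_perm_of_content_eq {t t' : α → ι} (h : content t = content t') :
    ∃ σ : Equiv.Perm α, t = t' ∘ σ := by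
  classical
  let e (i : ι) : {k // t k = i} ≃ {k // t' k = i} :=
    Fintype.equivOfCardEq (by rw [← content_apply t, ← content_apply t', h])
  exact ⟨Equiv.ofFiberEquiv e, funext fun k => (Equiv.ofFiberEquiv_map e k).symm⟩

theorem exists_content_eq {s : ι →₀ ℕ} (hs : s.degree = Fintype.card α) :
    ∃ t : α → ι, content t = s := by
  classical
  obtain ⟨l, hl⟩ : ∃ l : List ι, (l : Multiset ι) = s.toMultiset := Quot.exists_rep _
  have hlength : l.length = Fintype.card α := by
    rw [← hs, ← Multiset.coe_card, hl, Finsupp.card_toMultiset]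
    rfl
  let e : α ≃ Fin l.length := Fintype.equivFinOfCardEq hlength.symm
  refine ⟨l.get ∘ e, Multiset.toFinsupp.symm.injective ?_⟩
  calc Finsupp.toMultiset (content (l.get ∘ e))
      = ∑ k, {l.get (e k)} := by simp [content]
    _ = ∑ j, {l.get j} := Equiv.sum_comp e fun j => {l.get j}
    _ = l := by
        rw [Finset.sum, ← Multiset.sum_map_singleton (l : Multiset ι), ← List.ofFn_get l,
          ← Fin.univ_val_map, Multiset.map_map]
        simp
    _ = s.toMultiset := hl

theorem prod_X_eq_monomial_content {R : Type*} [CommSemiring R] (t : α → ι) :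
    ∏ k, (X (t k) : MvPolynomial ι R) = monomial (content t) 1 :=
  (monomial_sum_one _ _).symm

end Content

section SymmetricTensors

variable {α ι R : Type*} [CommRing R]

variable (α ι R) in
/-- The symmetric tensors in `(R^ι)^{⊗α}`, where a tensor is the function `(α → ι) → R` of its
coordinates. -/
def symmetricTensors : Submodule R ((α → ι) → R) where
  carrier := {a | ∀ (σ : Equiv.Perm α) (t : α → ι), a (t ∘ σ) = a t}
  add_mem' ha hb σ t := congrArg₂ (· + ·) (ha σ t) (hb σ t)
  zero_mem' _ _ := rfl
  smul_mem' c _ ha σ t := congrArg (c * ·) (ha σ t)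

theorem apply_eq_of_content_eq [Fintype α] {a : (α → ι) → R} (ha : a ∈ symmetricTensors α ι R)
    {t t' : α → ι} (h : content t = content t') : a t = a t' := by
  obtain ⟨σ, rfl⟩ := exists_eq_comp_perm_of_content_eq h
  exact ha σ t'

end SymmetricTensors

section TensorForm

variable {α ι R S : Type*} [Fintype α] [DecidableEq α] [Fintype ι] [CommRing R] [CommRing S]
  [Algebra R S]

/-- The homogeneous form of degree `card α` defined by a tensor: its value at `x` is the
contraction of the tensor with `x ⊗ ⋯ ⊗ x`. -/
noncomputable def tensorForm : ((α → ι) → R) →ₗ[R] MvPolynomial ι R :=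
  Fintype.linearCombination R fun t => ∏ k, X (t k)

theorem tensorForm_apply (a : (α → ι) → R) : tensorForm a = ∑ t, a t • ∏ k, X (t k) :=
  rfl

theorem aeval_tensorForm (x : ι → S) (a : (α → ι) → R) :
    aeval x (tensorForm a) = ∑ t, a t • ∏ k, x (t k) := by
  simp [tensorForm_apply]

theorem coeff_tensorForm [DecidableEq ι] (a : (α → ι) → R) (s : ι →₀ ℕ) :
    coeff s (tensorForm a) = ∑ t with content t = s, a t := by
  simp [tensorForm_apply, prod_X_eq_monomial_content, coeff_sum, Finset.sum_filter]

theorem sum_mul_eq_zero_of_tensorForm_eq_zero {a x : (α → ι) → R}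
    (ha : a ∈ symmetricTensors α ι R) (hx : tensorForm x = 0) : ∑ t, a t * x t = 0 := by
  classical
  rw [← Finset.sum_fiberwise_of_maps_to fun t _ =>
    Finset.mem_image_of_mem content (Finset.mem_univ t)]
  refine Finset.sum_eq_zero fun s hs => ?_
  obtain ⟨t, -, rfl⟩ := Finset.mem_image.mp hs
  calc ∑ t' with content t' = content t, a t' * x t'
      = ∑ t' with content t' = content t, a t * x t' :=
        Finset.sum_congr rfl fun t' ht' => by
          rw [apply_eq_of_content_eq ha (Finset.mem_filter.mp ht').2]
    _ = 0 := by rw [← Finset.mul_sum, ← coeff_tensorForm, hx, coeff_zero, mul_zero]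

theorem aeval_toMvPolynomial_tensorForm (G : Matrix ι ι R) (a : (α → ι) → R) :
    aeval G.toMvPolynomial (tensorForm a) = tensorForm (a ᵥ* piKronecker fun _ => G) := by
  have hlinear : ∀ i, G.toMvPolynomial i = ∑ j, G i j • X j := fun i => by
    simp [toMvPolynomial, X, smul_monomial]
  rw [aeval_tensorForm, tensorForm_apply]
  simp only [hlinear, Fintype.prod_sum, Finset.smul_sum, vecMul, dotProduct, piKronecker_apply,
    Finset.sum_smul, Finset.prod_smul, mul_smul]
  exact Finset.sum_comm

theorem vecMul_piKronecker_mem_symmetricTensors {a : (α → ι) → R}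
    (ha : a ∈ symmetricTensors α ι R) (G : Matrix ι ι R) :
    a ᵥ* piKronecker (fun _ => G) ∈ symmetricTensors α ι R := by
  intro σ u
  calc ∑ t, a t * ∏ k, G (t k) (u (σ k))
      = ∑ t : α → ι, a (t ∘ σ) * ∏ k, G (t (σ k)) (u (σ k)) :=
        (Equiv.sum_comp (σ.symm.arrowCongr (Equiv.refl ι)) fun t =>
          a t * ∏ k, G (t k) (u (σ k))).symm
    _ = ∑ t, a t * ∏ k, G (t k) (u k) :=
        Finset.sum_congr rfl fun t _ => by rw [ha σ, Equiv.prod_comp σ fun k => G (t k) (u k)]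

variable {K : Type*} [Field K] [CharZero K]

theorem eq_zero_of_tensorForm_eq_zero {a : (α → ι) → K} (ha : a ∈ symmetricTensors α ι K)
    (h : tensorForm a = 0) : a = 0 := by
  classical
  ext t
  have hcoeff : ({t' | content t' = content t} : Finset (α → ι)).card • a t = 0 := by
    rw [← Finset.sum_const, ← coeff_zero (R := K) (content t), ← h, coeff_tensorForm]
    exact Finset.sum_congr rfl fun t' ht' =>
      (apply_eq_of_content_eq ha (Finset.mem_filter.mp ht').2).symm
  exact (smul_eq_zero.mp hcoeff).resolve_left (Finset.card_ne_zero_of_mem (a := t) (by simp))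

theorem exists_tensorForm_eq_of_isHomogeneous {f : MvPolynomial ι K}
    (hf : f.IsHomogeneous (Fintype.card α)) : ∃ a ∈ symmetricTensors α ι K, tensorForm a = f := by
  classical
  let fiber (s : ι →₀ ℕ) : Finset (α → ι) := {t | content t = s}
  refine ⟨fun t => coeff (content t) f / (fiber (content t)).card, fun σ t => ?_, ?_⟩
  · simp only [content_comp_perm]
  ext s
  calc coeff s (tensorForm fun t => coeff (content t) f / (fiber (content t)).card)
      = ∑ _ ∈ fiber s, coeff s f / (fiber s).card := by
        rw [coeff_tensorForm]
        exact Finset.sum_congr rfl fun _ ht => by rw [(Finset.mem_filter.mp ht).2]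
    _ = coeff s f := by
        by_cases hs : coeff s f = 0
        · simp [hs]
        obtain ⟨t, rfl⟩ : ∃ t : α → ι, content t = s :=
          exists_content_eq (by rw [Finsupp.degree_eq_weight_one]; exact hf hs)
        have hcard : ((fiber (content t)).card : K) ≠ 0 :=
          Nat.cast_ne_zero.mpr (Finset.card_ne_zero_of_mem (a := t) (by simp [fiber]))
        rw [Finset.sum_const, nsmul_eq_mul, mul_div_cancel₀ _ hcard]

theorem vecMul_piKronecker_eq_self {a : (α → ι) → K} (ha : a ∈ symmetricTensors α ι K)
    {G : Matrix ι ι K} (h : aeval G.toMvPolynomial (tensorForm a) = tensorForm a) :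
    a ᵥ* piKronecker (fun _ => G) = a := by
  rw [aeval_toMvPolynomial_tensorForm, ← sub_eq_zero, ← map_sub] at h
  exact sub_eq_zero.mp <| eq_zero_of_tensorForm_eq_zero
    (sub_mem (vecMul_piKronecker_mem_symmetricTensors ha G) ha) h

end TensorForm

theorem symmetricTensors_le_span_pow {α ι K : Type*} [Fintype α] [Finite ι] [Field K]
    {D : Set (ι → K)} (hD : ∀ p : MvPolynomial ι K, (∀ v ∈ D, eval v p = 0) → p = 0) :
    symmetricTensors α ι K ≤ Submodule.span K ((fun v t => ∏ k, v (t k)) '' D) := by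
  classical
  have := Fintype.ofFinite ι
  intro a ha
  by_contra ha_span
  obtain ⟨φ, hφa, hker⟩ := Submodule.exists_le_ker_of_notMem ha_span
  obtain ⟨x, hx⟩ : ∃ x : (α → ι) → K, ∀ b, φ b = ∑ t, b t * x t :=
    ⟨_, φ.pi_apply_eq_sum_univ⟩
  have hform : tensorForm x = 0 := by
    refine hD _ fun v hv => ?_
    have hφv : φ (fun t => ∏ k, v (t k)) = 0 := hker (Submodule.subset_span ⟨v, hv, rfl⟩)
    rw [← hφv, hx, ← aeval_eq_eval, aeval_tensorForm]
    simp only [smul_eq_mul, mul_comm]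
  exact hφa ((hx a).trans (sum_mul_eq_zero_of_tensorForm_eq_zero ha hform))

section DoubleCentralizer

variable {K G V : Type*} [Field K] [Group G] [AddCommGroup V] [Module K V]

theorem asAlgebraHom_mem_span_range (ρ : Representation K G V) (a : MonoidAlgebra K G) :
    ρ.asAlgebraHom a ∈ Submodule.span K (Set.range ρ) := by
  rw [ρ.asAlgebraHom_def, MonoidAlgebra.lift_apply]
  exact Submodule.sum_mem _ fun g _ =>
    Submodule.smul_mem _ _ (Submodule.subset_span (Set.mem_range_self g))

theorem commute_restrictScalars_asModule (ρ : Representation K G V)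
    (e : Module.End (MonoidAlgebra K G) ρ.asModule) (g : G) :
    Commute (ρ.asModuleEquiv.conj (e.restrictScalars K)) (ρ g) := by
  ext v
  change ρ.asModuleEquiv (e (ρ.asModuleEquiv.symm (ρ g v))) =
    ρ g (ρ.asModuleEquiv (e (ρ.asModuleEquiv.symm v)))
  rw [ρ.asModuleEquiv_symm_map_rho, map_smul, ρ.asModuleEquiv_map_smul, ρ.asAlgebraHom_of]

-- Maschke's theorem makes `V` semisimple over `K[G]`, so the density theorem applies.
theorem mem_span_range_of_forall_commute [FiniteDimensional K V] [Finite G]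
    [NeZero (Nat.card G : K)] (ρ : Representation K G V) {Φ : Module.End K V}
    (hΦ : ∀ c : Module.End K V, (∀ g, Commute c (ρ g)) → Commute Φ c) :
    Φ ∈ Submodule.span K (Set.range ρ) := by
  let Φ' : Module.End (Module.End (MonoidAlgebra K G) ρ.asModule) ρ.asModule :=
    { ρ.asModuleEquiv.symm.conj Φ with
      map_smul' e v := congrArg ρ.asModuleEquiv.symm <|
        LinearMap.congr_fun (hΦ _ (commute_restrictScalars_asModule ρ e)) (ρ.asModuleEquiv v) }
  have : Module.Finite (Module.End (MonoidAlgebra K G) ρ.asModule) ρ.asModule :=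
    Module.Finite.of_restrictScalars_finite K _ _
  obtain ⟨a, ha⟩ := Module.Finite.toModuleEnd_moduleEnd_surjective Φ'
  have hΦa : ρ.asAlgebraHom a = Φ := by
    ext v
    have hv : ρ.asModuleEquiv (a • ρ.asModuleEquiv.symm v) = Φ v :=
      congrArg ρ.asModuleEquiv (LinearMap.congr_fun ha (ρ.asModuleEquiv.symm v))
    rwa [ρ.asModuleEquiv_map_smul, LinearEquiv.apply_symm_apply] at hv
  exact hΦa ▸ asAlgebraHom_mem_span_range ρ a

end DoubleCentralizer

section SchurWeyl

variable {α n K : Type*} [Fintype α] [DecidableEq α] [Fintype n] [DecidableEq n] [Field K]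

theorem apply_comp_comp_of_commute_tensorPerm {c : Matrix (α → n) (α → n) K}
    {σ : Equiv.Perm α} (hc : Commute c (tensorPerm n K σ)) (I J : α → n) :
    c (I ∘ σ) (J ∘ σ) = c I J := by
  rw [← tensorPerm_mul_apply σ c I, ← hc.eq, mul_tensorPerm_apply]

theorem mem_span_piKronecker_of_commute_tensorPerm [Infinite K] {c : Matrix (α → n) (α → n) K}
    (hc : ∀ σ, Commute c (tensorPerm n K σ)) :
    c ∈ Submodule.span K
      (Set.range fun g : GeneralLinearGroup n K => piKronecker fun _ : α => g.val) := by
  let toMatrix : ((α → n × n) → K) →ₗ[K] Matrix (α → n) (α → n) K :=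
    { toFun a := of fun I J => a fun k => (I k, J k)
      map_add' _ _ := rfl
      map_smul' _ _ := rfl }
  let tensor (t : α → n × n) : K := c (fun k => (t k).1) fun k => (t k).2
  have htensor : tensor ∈ symmetricTensors α (n × n) K := fun σ t =>
    apply_comp_comp_of_commute_tensorPerm (hc σ) (fun k => (t k).1) fun k => (t k).2
  have hdense : ∀ p : MvPolynomial (n × n) K,
      (∀ v ∈ Set.range fun (g : GeneralLinearGroup n K) (q : n × n) => g.val q.1 q.2,
        eval v p = 0) → p = 0 := fun p hp =>
    eq_of_eval_eq_on_gl (q := 0) fun g => (hp _ ⟨g, rfl⟩).trans (map_zero _).symm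
  have hspan := Submodule.mem_map_of_mem (f := toMatrix)
    (symmetricTensors_le_span_pow hdense htensor)
  rwa [Submodule.map_span, ← Set.range_comp, ← Set.range_comp] at hspan

theorem mem_span_tensorPerm_of_commute_piKronecker [CharZero K] {Φ : Matrix (α → n) (α → n) K}
    (hΦ : ∀ g : GeneralLinearGroup n K, Commute Φ (piKronecker fun _ => g.val)) :
    Φ ∈ Submodule.span K (Set.range (tensorPerm n K : Equiv.Perm α → _)) := by
  let toEnd : Matrix (α → n) (α → n) K ≃ₐ[K] Module.End K ((α → n) → K) := toLinAlgEquiv'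
  let ρ : Representation K (Equiv.Perm α) ((α → n) → K) :=
    (toEnd : _ →* Module.End K ((α → n) → K)).comp (tensorPerm n K)
  have : NeZero (Nat.card (Equiv.Perm α) : K) := ⟨by simp⟩
  have hcentralizer : ∀ c : Matrix (α → n) (α → n) K,
      (∀ σ, Commute c (tensorPerm n K σ)) → Commute Φ c := by
    intro c hc
    have hle : Submodule.span K (Set.range fun g : GeneralLinearGroup n K =>
        piKronecker fun _ : α => g.val) ≤ (Subalgebra.centralizer K {Φ}).toSubmodule := by
      rw [Submodule.span_le, Set.range_subset_iff]
      exact fun g => Set.mem_centralizer_iff.mpr <| by simpa using (hΦ g).eq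
    exact Set.mem_centralizer_iff.mp (hle (mem_span_piKronecker_of_commute_tensorPerm hc)) Φ rfl
  have hmem : toEnd Φ ∈ Submodule.span K (Set.range ρ) :=
    mem_span_range_of_forall_commute ρ fun c hc => by
      have hc' : ∀ σ, Commute (toEnd.symm c) (tensorPerm n K σ) := fun σ => by
        simpa [ρ] using (hc σ).map toEnd.symm
      simpa using (hcentralizer _ hc').map toEnd
  have hspan := Submodule.mem_map_of_mem (f := toEnd.symm.toLinearMap) hmem
  rw [Submodule.map_span, ← Set.range_comp] at hspan
  simpa [ρ, Function.comp_def] using hspan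

end SchurWeyl

section SimultaneousConjugation

open scoped Kronecker

variable {α μ n R : Type*} [CommRing R]

theorem sum_pi_prod {β γ M : Type*} [Fintype α] [DecidableEq α] [Fintype β] [Fintype γ]
    [AddCommMonoid M] (F : (α → β × γ) → M) :
    ∑ t, F t = ∑ s : α → β, ∑ u : α → γ, F fun k => (s k, u k) := by
  rw [← Fintype.sum_prod_type', ← Equiv.sum_comp (Equiv.arrowProdEquivProdArrow α _ _).symm]
  rfl

variable (R) in
/-- The `i`-th generic `n × n` matrix; its entries are variables. -/
noncomputable def genericMatrix (i : μ) : Matrix n n (MvPolynomial (μ × n × n) R) :=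
  of fun a b => X (i, a, b)

/-- The `w`-th slice of a tensor in `(R^μ ⊗ Rⁿ ⊗ Rⁿ)^{⊗α}`, as an endomorphism of `(Rⁿ)^{⊗α}`.
The two factors `Rⁿ` are swapped so that contracting with matrices is a trace. -/
def slice (a : (α → μ × n × n) → R) (w : α → μ) : Matrix (α → n) (α → n) R :=
  of fun J I => a fun k => (w k, I k, J k)

/-- The linear map `X ↦ (g * X i * h)ᵢ` on families of matrices. -/
def conjMatrix [DecidableEq μ] (g h : Matrix n n R) : Matrix (μ × n × n) (μ × n × n) R :=
  (1 : Matrix μ μ R) ⊗ₖ (g ⊗ₖ hᵀ)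

variable [Fintype α] [DecidableEq α] [Fintype n]

theorem isHomogeneous_permTrace_genericMatrix [DecidableEq n] (σ : Equiv.Perm α)
    (w : α → μ) :
    (permTrace σ fun k => genericMatrix (n := n) R (w k)).IsHomogeneous (Fintype.card α) := by
  rw [permTrace_eq_sum]
  refine IsHomogeneous.sum _ _ _ fun J _ => ?_
  simpa using IsHomogeneous.prod Finset.univ
    (fun k => genericMatrix R (w k) (J (σ k)) (J k)) _ fun k _ => isHomogeneous_X R _

variable [Fintype μ]

theorem tensorForm_eq_sum_trace (a : (α → μ × n × n) → R) :
    tensorForm a = ∑ w : α → μ,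
      trace ((slice a w).map C * piKronecker fun k => genericMatrix R (w k)) := by
  simp only [tensorForm_apply, sum_pi_prod, trace, diag_apply, Matrix.mul_apply, slice,
    piKronecker_apply, genericMatrix, map_apply, of_apply, smul_eq_C_mul]
  exact Finset.sum_congr rfl fun w _ => Finset.sum_comm

theorem slice_vecMul_conjMatrix [DecidableEq μ] (a : (α → μ × n × n) → R) (g h : Matrix n n R)
    (w : α → μ) :
    slice (a ᵥ* piKronecker fun _ => conjMatrix g h) w =
      piKronecker (fun _ => h) * slice a w * piKronecker fun _ => g := by
  have hone : ∀ v : α → μ, ∏ k, (1 : Matrix μ μ R) (v k) (w k) = (1 : Matrix _ _ R) v w :=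
    fun v => congrFun₂ piKronecker_one v w
  ext J I
  simp only [slice, of_apply, vecMul, dotProduct, sum_pi_prod, piKronecker_apply, conjMatrix,
    kroneckerMap_apply, Finset.prod_mul_distrib, hone, transpose_apply, Matrix.mul_apply,
    Finset.sum_mul]
  rw [Finset.sum_eq_single w]
  · refine Finset.sum_congr rfl fun I' _ => Finset.sum_congr rfl fun J' _ => ?_
    rw [one_apply_eq]
    ring
  · intro v _ hv
    simp [one_apply_ne hv]
  · simp

variable {K : Type*} [Field K] [CharZero K] [DecidableEq μ] [DecidableEq n]

theorem commute_slice_of_aeval_conjMatrix_eq_self {a : (α → μ × n × n) → K}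
    (ha : a ∈ symmetricTensors α (μ × n × n) K) {g h : Matrix n n K} (hgh : g * h = 1)
    (hfix : aeval (conjMatrix g h).toMvPolynomial (tensorForm a) = tensorForm a) (w : α → μ) :
    Commute (slice a w) (piKronecker fun _ => g) := by
  have hslice : piKronecker (fun _ => h) * slice a w * piKronecker (fun _ => g) = slice a w := by
    rw [← slice_vecMul_conjMatrix, vecMul_piKronecker_eq_self ha hfix]
  have hcancel : piKronecker (fun _ : α => g) * piKronecker (fun _ => h) = 1 := by
    rw [← piKronecker_mul, hgh, piKronecker_one]
  calc slice a w * piKronecker (fun _ => g)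
      = piKronecker (fun _ => g) * piKronecker (fun _ => h) *
          (slice a w * piKronecker fun _ => g) := by rw [hcancel, one_mul]
    _ = piKronecker (fun _ => g) *
          (piKronecker (fun _ => h) * slice a w * piKronecker fun _ => g) := by
        simp only [mul_assoc]
    _ = piKronecker (fun _ => g) * slice a w := by rw [hslice]

theorem mem_span_permTrace_of_aeval_conjMatrix_eq_self {f : MvPolynomial (μ × n × n) K}
    (hf : f.IsHomogeneous (Fintype.card α))
    (hinv : ∀ g : GeneralLinearGroup n K,
      aeval (conjMatrix g.val (g⁻¹).val).toMvPolynomial f = f) :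
    f ∈ Submodule.span K (Set.range fun p : Equiv.Perm α × (α → μ) =>
      permTrace p.1 fun k => genericMatrix K (p.2 k)) := by
  obtain ⟨a, ha, rfl⟩ := exists_tensorForm_eq_of_isHomogeneous hf
  rw [tensorForm_eq_sum_trace]
  refine Submodule.sum_mem _ fun w _ => ?_
  have hmem := mem_span_tensorPerm_of_commute_piKronecker fun g =>
    commute_slice_of_aeval_conjMatrix_eq_self ha g.mul_inv (hinv g) w
  rw [← Set.image_univ] at hmem
  refine Submodule.span_mono ?_
    (trace_map_mul_piKronecker_mem_span hmem fun k => genericMatrix K (w k))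
  rintro _ ⟨σ, -, rfl⟩
  exact ⟨(σ, w), rfl⟩

end SimultaneousConjugation

theorem homogeneousComponent_aeval_toMvPolynomial {ι R : Type*} [Fintype ι] [CommRing R]
    (G : Matrix ι ι R) (d : ℕ) (f : MvPolynomial ι R) :
    homogeneousComponent d (aeval G.toMvPolynomial f) =
      aeval G.toMvPolynomial (homogeneousComponent d f) := by
  induction f using MvPolynomial.induction_on' with
  | add p q hp hq => simp only [map_add, hp, hq]
  | monomial s c =>
    have hs : (monomial s c).IsHomogeneous s.degree := isHomogeneous_monomial c rfl
    have hGs : (aeval G.toMvPolynomial (monomial s c)).IsHomogeneous s.degree := by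
      simpa only [one_mul] using hs.aeval _ G.toMvPolynomial_isHomogeneous
    rw [homogeneousComponent_of_mem hs, homogeneousComponent_of_mem hGs, apply_ite (aeval _),
      map_zero]

section MatrixInvariants

variable {K : Type} [Field K] {n m : ℕ} {f : MvPolynomial (Fin m × Fin n × Fin n) K}

theorem mem_matrixInvariants_iff :
    f ∈ matrixInvariants K n m ↔
      ∀ (g : GeneralLinearGroup (Fin n) K) (X : Fin m → Matrix (Fin n) (Fin n) K),
        aeval (matCoords fun i => g.val * X i * (g⁻¹).val) f = aeval (matCoords X) f := by
  simp only [matrixInvariants, Algebra.mem_iInf, AlgHom.mem_equalizer]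

theorem conjMatrix_mulVec_matCoords (g h : Matrix (Fin n) (Fin n) K)
    (X : Fin m → Matrix (Fin n) (Fin n) K) :
    conjMatrix g h *ᵥ matCoords X = matCoords fun i => g * X i * h := by
  ext ⟨i, a, b⟩
  simp only [mulVec, dotProduct, conjMatrix, kroneckerMap_apply, Fintype.sum_prod_type, matCoords,
    transpose_apply, Matrix.mul_apply, Finset.sum_mul]
  rw [Finset.sum_eq_single i, Finset.sum_comm]
  · refine Finset.sum_congr rfl fun b' _ => Finset.sum_congr rfl fun a' _ => ?_
    rw [one_apply_eq]
    ring
  · intro j _ hj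
    simp [one_apply_ne hj.symm]
  · simp

theorem mem_matrixInvariants_iff_aeval_conjMatrix [Infinite K] :
    f ∈ matrixInvariants K n m ↔ ∀ g : GeneralLinearGroup (Fin n) K,
      aeval (conjMatrix g.val (g⁻¹).val).toMvPolynomial f = f := by
  have heval : ∀ (g : GeneralLinearGroup (Fin n) K) (X : Fin m → Matrix (Fin n) (Fin n) K),
      aeval (matCoords X) (aeval (conjMatrix g.val (g⁻¹).val).toMvPolynomial f) =
        aeval (matCoords fun i => g.val * X i * (g⁻¹).val) f := by
    intro g X
    rw [← conjMatrix_mulVec_matCoords, ← AlgHom.comp_apply, comp_aeval]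
    congr 2
    ext p
    rw [aeval_eq_eval]
    exact toMvPolynomial_eval_eq_apply _ p _
  rw [mem_matrixInvariants_iff]
  refine forall_congr' fun g => ⟨fun h => MvPolynomial.funext fun x => ?_, fun h X => ?_⟩
  · exact (heval g fun i => of fun a b => x (i, a, b)).trans (h _)
  · rw [← heval, h]

theorem homogeneousComponent_mem_matrixInvariants [Infinite K] (hf : f ∈ matrixInvariants K n m)
    (d : ℕ) : homogeneousComponent d f ∈ matrixInvariants K n m := by
  rw [mem_matrixInvariants_iff_aeval_conjMatrix] at hf ⊢
  intro g
  rw [← homogeneousComponent_aeval_toMvPolynomial, hf]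

theorem permTrace_genericMatrix_mem_matrixInvariants {α : Type*} [Fintype α] [DecidableEq α]
    (σ : Equiv.Perm α) (w : α → Fin m) :
    permTrace σ (fun k => genericMatrix K (w k)) ∈ matrixInvariants K n m := by
  have heval : ∀ X : Fin m → Matrix (Fin n) (Fin n) K,
      aeval (matCoords X) (permTrace σ fun k => genericMatrix K (w k)) =
        permTrace σ fun k => X (w k) := by
    intro X
    refine (map_permTrace (aeval (R := K) (matCoords X)).toRingHom σ _).trans ?_
    congr 1
    ext k a b
    exact aeval_X _ _
  rw [mem_matrixInvariants_iff]
  intro g X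
  rw [heval, heval, permTrace_mul_mul_of_mul_eq_one]
  exact g.inv_mul

theorem mem_span_permTrace_of_mem_matrixInvariants [CharZero K] {d : ℕ}
    (hf : f ∈ matrixInvariants K n m) (hfd : f.IsHomogeneous d) :
    f ∈ Submodule.span K (Set.range fun p : Equiv.Perm (Fin d) × (Fin d → Fin m) =>
      permTrace p.1 fun k => genericMatrix K (p.2 k)) :=
  mem_span_permTrace_of_aeval_conjMatrix_eq_self ((Fintype.card_fin d).symm ▸ hfd)
    (mem_matrixInvariants_iff_aeval_conjMatrix.mp hf)

end MatrixInvariants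

theorem stmt_3_general (K : Type) [Field K] [CharZero K] (n m : ℕ) :
    Algebra.adjoin K
        {f | f ∈ matrixInvariants K n m ∧ ∃ d ≤ n ^ 2, f.IsHomogeneous d}
      = matrixInvariants K n m := by
  refine le_antisymm (Algebra.adjoin_le fun f hf => hf.1) fun f hf => ?_
  rw [← sum_homogeneousComponent f]
  refine Subalgebra.sum_mem _ fun d _ => ?_
  have hspan := mem_span_permTrace_of_mem_matrixInvariants
    (homogeneousComponent_mem_matrixInvariants hf d) (homogeneousComponent_isHomogeneous d f)
  suffices hle : Submodule.span K (Set.range fun p : Equiv.Perm (Fin d) × (Fin d → Fin m) =>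
      permTrace p.1 fun k => genericMatrix K (p.2 k)) ≤ Subalgebra.toSubmodule (Algebra.adjoin K
        {f | f ∈ matrixInvariants K n m ∧ ∃ d ≤ n ^ 2, f.IsHomogeneous d}) from hle hspan
  rw [Submodule.span_le, Set.range_subset_iff]
  rintro ⟨σ, w⟩
  refine permTrace_mem_of_forall_card_le (fun α _ _ σ w hcard => ?_) (Fin d) σ w
  exact Algebra.subset_adjoin ⟨permTrace_genericMatrix_mem_matrixInvariants σ w, Fintype.card α,
    by simpa using hcard, isHomogeneous_permTrace_genericMatrix σ w⟩

/-- **Procesi–Razmyslov.** Over an algebraically closed field of characteristic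
zero, the ring of matrix invariants `S(n,m)` is generated by its homogeneous elements of
degree `≤ n^2`. -/
theorem stmt_3 (K : Type) [Field K] [IsAlgClosed K] [CharZero K] (n m : ℕ)
    (hn : 0 < n) (hm : 0 < m) :
    Algebra.adjoin K
        {f | f ∈ matrixInvariants K n m ∧ ∃ d ≤ n ^ 2, f.IsHomogeneous d}
      = matrixInvariants K n m :=
  stmt_3_general K n m
end

section
/- Let K be an algebraically closed field and n, m positive integers. The homogeneous elements of degree at most n^6 in R(n,m) = K[Mat_{n,n}^m]^{SL_n × SL_n} form a separating subset of R(n,m); that is, β_sep(R(n,m)) ≤ n^6. -/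
open MvPolynomial Matrix

/-!
Suppose `v` and `w` agree on all semi-invariants of degree at most `n ^ 6`.

If `v` maps a subspace `U` into a subspace of smaller dimension, then a one-parameter subgroup of
`SL_n × SL_n` drives `v` to `0`, so all semi-invariants without constant term vanish at `v`.
Otherwise the regularity lemma applies: the maximal rank of the blow-ups `∑ T_l ⊗ v_l` with `T_l` of
size `d` is divisible by `d`, because it is attained by generic elements `T_l` of a cyclic division
algebra of degree `d`. It follows, as in the work of Derksen and Makam, that `v` has invertible
blow-ups of all sizes `d ≥ n`.

An invertible blow-up `∑ T_l ⊗ v_l` yields covariants, namely the entries of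
`(∑ T_l ⊗ x_l)⁻¹ * (1 ⊗ x_l)` cleared of denominators. Evaluating them at `v` and at `w` gives a
finite-dimensional algebra with two `n`-dimensional representations. All its elements come from
covariants of degree at most `n ^ 5`, whose determinants are semi-invariants of degree at most
`n ^ 6`, so the two representations have the same characteristic polynomials. After degenerating `v`
and `w` until both representations are semisimple, the Brauer–Nesbitt theorem makes them isomorphic,
whence `w = A v B`. Comparing the determinants of blow-ups of sizes `n` and `n + 1` gives
`(det A * det B) ^ n = (det A * det B) ^ (n + 1) = 1`, and `det A * det B = 1`.
-/

open scoped Kronecker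

section Valuation

variable {ι Γ R : Type*} [Fintype ι] [AddCommGroup Γ] [LinearOrder Γ] [IsOrderedAddMonoid Γ]

lemma withTop_card_nsmul_lt_sum {w : Γ} {f : ι → WithTop Γ} (hle : ∀ i, (w : WithTop Γ) ≤ f i)
    {j : ι} (hj : (w : WithTop Γ) < f j) :
    ((Fintype.card ι • w : Γ) : WithTop Γ) < ∑ i, f i := by
  by_cases htop : ∃ i, f i = ⊤
  · obtain ⟨i, hi⟩ := htop
    rw [WithTop.sum_eq_top.2 ⟨i, Finset.mem_univ i, hi⟩]
    exact WithTop.coe_lt_top _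
  · push Not at htop
    lift f to ι → Γ using htop
    rw [← WithTop.coe_sum, WithTop.coe_lt_coe]
    calc Fintype.card ι • w = ∑ _i : ι, w := by simp
      _ < ∑ i, f i := Finset.sum_lt_sum (fun i _ => WithTop.coe_le_coe.1 (hle i))
          ⟨j, Finset.mem_univ j, WithTop.coe_lt_coe.1 hj⟩

lemma det_ne_zero_of_addValuation_eq_iff [DecidableEq ι] [CommRing R]
    (v : AddValuation R (WithTop Γ)) {M : Matrix ι ι R} {w : Γ} (π₀ : Equiv.Perm ι)
    (hle : ∀ i k, (w : WithTop Γ) ≤ v (M i k)) (heq : ∀ i k, v (M i k) = w ↔ i = π₀ k) :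
    M.det ≠ 0 := by
  have hterm (π : Equiv.Perm ι) : v (π.sign • ∏ i, M (π i) i) = ∑ i, v (M (π i) i) := by
    have hprod : v (∏ i, M (π i) i) = ∑ i, v (M (π i) i) := map_prod v.toValuation _ _
    rcases Int.units_eq_one_or π.sign with h | h <;> simp [h, hprod]
  have hterm₀ : v (π₀.sign • ∏ i, M (π₀ i) i) = (Fintype.card ι • w : Γ) := by
    rw [hterm, Finset.sum_congr rfl fun i _ => (heq (π₀ i) i).2 rfl, ← WithTop.coe_sum]
    simp
  intro hdet
  rw [det_apply, ← Finset.add_sum_erase _ _ (Finset.mem_univ π₀), add_eq_zero_iff_eq_neg] at hdet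
  refine (v.map_lt_sum (WithTop.coe_ne_top (a := Fintype.card ι • w)) fun π hπ => ?_).ne'
    ((v.map_neg _).symm.trans (hdet ▸ hterm₀))
  obtain ⟨j, hj⟩ : ∃ j, π j ≠ π₀ j := by
    simpa [Equiv.ext_iff] using Finset.ne_of_mem_erase hπ
  rw [hterm]
  exact withTop_card_nsmul_lt_sum (fun i => hle _ i)
    (lt_of_le_of_ne (hle _ j) fun h => hj ((heq _ j).1 h.symm))

end Valuation

section HahnSeries

variable {Γ R S : Type*} [AddCommMonoid Γ] [PartialOrder Γ] [IsOrderedCancelAddMonoid Γ]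
  [Semiring R] [Semiring S]

/-- The coefficientwise action of an injective ring homomorphism on Hahn series. Injectivity makes
it preserve supports, hence products. -/
def hahnSeriesMap (τ : R →+* S) (hτ : Function.Injective τ) :
    HahnSeries Γ R →+* HahnSeries Γ S where
  toFun x := x.map τ
  map_one' := by ext; simp [HahnSeries.coeff_one, apply_ite τ]
  map_zero' := by ext; simp
  map_add' x y := by ext; simp
  map_mul' x y := by
    ext z
    simp only [HahnSeries.map_coeff, HahnSeries.coeff_mul, map_sum, map_mul]
    refine Finset.sum_congr ?_ fun _ _ => rfl
    ext p
    simp [map_ne_zero_iff τ hτ]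

@[simp]
lemma hahnSeriesMap_coeff (τ : R →+* S) (hτ : Function.Injective τ) (x : HahnSeries Γ R) (g : Γ) :
    (hahnSeriesMap τ hτ x).coeff g = τ (x.coeff g) := rfl

lemma orderTop_hahnSeriesMap {Γ : Type*} [AddCommMonoid Γ] [LinearOrder Γ]
    [IsOrderedCancelAddMonoid Γ] (τ : R →+* S) (hτ : Function.Injective τ) (x : HahnSeries Γ R) :
    (hahnSeriesMap τ hτ x).orderTop = x.orderTop :=
  eq_of_forall_le_iff fun g => by
    simp only [HahnSeries.le_orderTop_iff_forall, hahnSeriesMap_coeff, map_eq_zero_iff τ hτ]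

end HahnSeries

section CyclicAlgebra

variable {L : Type*} [Field L] (d : ℕ) [NeZero d]

/-- The substitution `t ↦ t ^ d` on Laurent series. -/
noncomputable def laurentExpand : HahnSeries ℤ L →+* HahnSeries ℤ L :=
  HahnSeries.embDomainRingHom (AddMonoidHom.mulLeft (d : ℤ))
    (fun _ _ h => mul_left_cancel₀ (NeZero.ne (d : ℤ)) h) fun _ _ =>
      mul_le_mul_iff_right₀ (Nat.cast_pos.2 (NeZero.pos d))

@[simp]
lemma laurentExpand_single (g : ℤ) (a : L) :
    laurentExpand d (HahnSeries.single g a) = HahnSeries.single (d * g) a :=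
  HahnSeries.embDomain_single

@[simp]
lemma laurentExpand_C (a : L) : laurentExpand d (HahnSeries.C a) = HahnSeries.C a :=
  HahnSeries.embDomainRingHom_C

lemma orderTop_laurentExpand {x : HahnSeries ℤ L} (hx : x ≠ 0) :
    (laurentExpand d x).orderTop = (d * x.order : ℤ) := by
  refine HahnSeries.orderTop_embDomain.trans ?_
  rw [← HahnSeries.order_eq_orderTop_of_ne_zero hx]
  rfl

/-- The substitution `t ↦ t ^ d`, followed by conjugation with the diagonal matrix whose entries are
the powers `t ^ i`. -/
noncomputable def expandConj : Matrix (ZMod d) (ZMod d) (HahnSeries ℤ L) →+*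
    Matrix (ZMod d) (ZMod d) (HahnSeries ℤ L) where
  toFun M := of fun i k => HahnSeries.single ((k.val : ℤ) - i.val) 1 * laurentExpand d (M i k)
  map_one' := by
    ext1 i k
    rcases eq_or_ne i k with rfl | h <;> simp [*]
  map_zero' := by ext1; simp
  map_add' M N := by ext1; simp [mul_add]
  map_mul' M N := by
    ext1 i k
    simp only [of_apply, mul_apply, map_sum, Finset.mul_sum]
    refine Finset.sum_congr rfl fun j _ => ?_
    rw [mul_mul_mul_comm, HahnSeries.single_mul_single, map_mul, one_mul]
    congr 3
    ring

lemma expandConj_apply (M : Matrix (ZMod d) (ZMod d) (HahnSeries ℤ L)) (i k : ZMod d) :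
    expandConj d M i k =
      HahnSeries.single ((k.val : ℤ) - i.val) 1 * laurentExpand d (M i k) := rfl

lemma intCast_eq_sub_of_orderTop_expandConj {M : Matrix (ZMod d) (ZMod d) (HahnSeries ℤ L)}
    {i k : ZMod d} {w : ℤ} (h : (expandConj d M i k).orderTop = w) : (w : ZMod d) = k - i := by
  have hM : M i k ≠ 0 := by
    rintro hM
    simp [expandConj_apply, hM] at h
  rw [expandConj_apply, ← HahnSeries.addVal_apply, AddValuation.map_mul, HahnSeries.addVal_apply,
    HahnSeries.addVal_apply, HahnSeries.orderTop_single one_ne_zero,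
    orderTop_laurentExpand d hM] at h
  have h' : (k.val : ℤ) - i.val + d * (M i k).order = w := WithTop.coe_injective h
  rw [← h']
  simp

lemma det_expandConj (M : Matrix (ZMod d) (ZMod d) (HahnSeries ℤ L)) :
    (expandConj d M).det = laurentExpand d M.det := by
  have hM : expandConj d M =
      diagonal (fun i : ZMod d => HahnSeries.single (-(i.val : ℤ)) (1 : L)) *
        (laurentExpand d).mapMatrix M *
          diagonal fun k : ZMod d => HahnSeries.single (k.val : ℤ) (1 : L) := by
    ext1 i k
    rw [mul_diagonal, diagonal_mul, mul_right_comm, HahnSeries.single_mul_single,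
      expandConj_apply, one_mul, neg_add_eq_sub]
    rfl
  have hdiag : (∏ i : ZMod d, HahnSeries.single (-(i.val : ℤ)) (1 : L)) *
      ∏ k : ZMod d, HahnSeries.single (k.val : ℤ) (1 : L) = 1 := by
    simp [← Finset.prod_mul_distrib, HahnSeries.single_mul_single]
  rw [hM, det_mul, det_mul, det_diagonal, det_diagonal, RingHom.map_det, mul_right_comm, hdiag,
    one_mul]

variable (τ : L →+* L)

/-- The cyclic algebra of degree `d` attached to `τ`, realized inside the matrices over Laurent
series: after `expandConj`, its elements become the matrices `N` with
`τ (N (i + 1) (k + 1)) = N i k`. -/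
noncomputable def cyclicAlgebra : Subring (Matrix (ZMod d) (ZMod d) (HahnSeries ℤ L)) :=
  RingHom.eqLocus
    (((hahnSeriesMap τ τ.injective).mapMatrix.comp
      (reindexRingEquiv _ (Equiv.subRight (1 : ZMod d))).toRingHom).comp (expandConj d))
    (expandConj d)

variable {d τ}

lemma mem_cyclicAlgebra {M : Matrix (ZMod d) (ZMod d) (HahnSeries ℤ L)} :
    M ∈ cyclicAlgebra d τ ↔ ∀ i k,
      hahnSeriesMap τ τ.injective (expandConj d M (i + 1) (k + 1)) = expandConj d M i k :=
  Matrix.ext_iff.symm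

lemma orderTop_expandConj_add {M : Matrix (ZMod d) (ZMod d) (HahnSeries ℤ L)}
    (hM : M ∈ cyclicAlgebra d τ) (i k j : ZMod d) :
    (expandConj d M (i + j) (k + j)).orderTop = (expandConj d M i k).orderTop := by
  obtain ⟨j, rfl⟩ := ZMod.natCast_zmod_surjective j
  induction j with
  | zero => simp
  | succ j ih =>
    rw [← ih, ← mem_cyclicAlgebra.1 hM (i + j), orderTop_hahnSeriesMap]
    push_cast
    simp only [add_assoc]

lemma det_ne_zero_of_mem_cyclicAlgebra {M : Matrix (ZMod d) (ZMod d) (HahnSeries ℤ L)}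
    (hM : M ∈ cyclicAlgebra d τ) (h0 : M ≠ 0) : M.det ≠ 0 := by
  obtain ⟨⟨i₀, k₀⟩, hmin⟩ := Finite.exists_min fun p : ZMod d × ZMod d =>
    (expandConj d M p.1 p.2).orderTop
  have hne : (expandConj d M i₀ k₀).orderTop ≠ ⊤ := fun htop => h0 <| by
    ext1 i k
    have : expandConj d M i k = 0 :=
      HahnSeries.orderTop_eq_top.1 (top_le_iff.1 (htop ▸ hmin (i, k)))
    simpa [expandConj_apply] using this
  obtain ⟨w, hw⟩ := WithTop.ne_top_iff_exists.1 hne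
  have hdet : (expandConj d M).det ≠ 0 := by
    refine det_ne_zero_of_addValuation_eq_iff (HahnSeries.addVal ℤ L) (w := w)
      (Equiv.addRight (i₀ - k₀)) (fun i k => ?_) fun i k => ⟨fun h => ?_, ?_⟩
    · exact hw ▸ hmin (i, k)
    · have h₁ := intCast_eq_sub_of_orderTop_expandConj d h
      have h₂ := intCast_eq_sub_of_orderTop_expandConj d hw.symm
      change i = k + (i₀ - k₀)
      linear_combination h₁ - h₂
    · rintro rfl
      rw [hw, HahnSeries.addVal_apply, ← orderTop_expandConj_add hM i₀ k₀ (k - k₀)]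
      congr 2
      simp [add_comm, sub_eq_add_neg, add_assoc]
  rintro h
  exact hdet (by rw [det_expandConj, h, map_zero])

lemma isUnit_or_eq_zero_of_cyclicAlgebra (M : cyclicAlgebra d τ) : IsUnit M ∨ M = 0 := by
  refine or_iff_not_imp_right.2 fun h0 => ?_
  have hdet : IsUnit (M : Matrix (ZMod d) (ZMod d) (HahnSeries ℤ L)).det :=
    (det_ne_zero_of_mem_cyclicAlgebra M.2 (by simpa using h0)).isUnit
  obtain ⟨N, hMN, hNM⟩ := isUnit_iff_exists.1 ((isUnit_iff_isUnit_det _).2 hdet)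
  have hN : N ∈ cyclicAlgebra d τ := by
    have h₁ := congrArg ((hahnSeriesMap τ τ.injective).mapMatrix.comp
      (reindexRingEquiv _ (Equiv.subRight (1 : ZMod d))).toRingHom |>.comp (expandConj d)) hNM
    have h₂ := congrArg (expandConj d) hMN
    rw [map_mul, map_one, show _ = _ from M.2] at h₁
    rw [map_mul, map_one] at h₂
    exact left_inv_eq_right_inv h₁ h₂
  exact isUnit_iff_exists.2 ⟨⟨N, hN⟩, Subtype.ext hMN, Subtype.ext hNM⟩

lemma C_smul_mem_cyclicAlgebra {c : L} (hc : τ c = c)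
    {M : Matrix (ZMod d) (ZMod d) (HahnSeries ℤ L)} (hM : M ∈ cyclicAlgebra d τ) :
    (HahnSeries.C c : HahnSeries ℤ L) • M ∈ cyclicAlgebra d τ := by
  have hexpand (i k : ZMod d) :
      expandConj d ((HahnSeries.C c : HahnSeries ℤ L) • M) i k =
        HahnSeries.C c * expandConj d M i k := by
    rw [expandConj_apply, expandConj_apply, Matrix.smul_apply, smul_eq_mul, map_mul,
      laurentExpand_C, mul_left_comm]
  have hmap : hahnSeriesMap τ τ.injective (HahnSeries.C c : HahnSeries ℤ L) = HahnSeries.C c := by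
    ext g
    simp [HahnSeries.C_apply, HahnSeries.coeff_single, apply_ite τ, hc]
  refine mem_cyclicAlgebra.2 fun i k => ?_
  rw [hexpand, hexpand, map_mul, hmap, mem_cyclicAlgebra.1 hM]

lemma single_mem_cyclicAlgebra {a : ZMod d → ZMod d → L}
    (ha : ∀ i k, τ (a (i + 1) (k + 1)) = a i k) :
    (of fun i k => HahnSeries.single ((((k - i).val + i.val) / d : ℕ) : ℤ) (a i k)) ∈
      cyclicAlgebra d τ := by
  have hexpand (i k : ZMod d) : expandConj d
      (of fun i k => HahnSeries.single ((((k - i).val + i.val) / d : ℕ) : ℤ) (a i k)) i k =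
        HahnSeries.single ((k - i).val : ℤ) (a i k) := by
    have hexp : (k.val : ℤ) - i.val + d * (((k - i).val + i.val) / d : ℕ) = (k - i).val := by
      have hval := ZMod.val_add (k - i) i
      rw [sub_add_cancel] at hval
      have hdiv := Nat.div_add_mod ((k - i).val + i.val) d
      rw [← hval] at hdiv
      zify at hdiv ⊢
      linarith
    rw [expandConj_apply, of_apply, laurentExpand_single, HahnSeries.single_mul_single, one_mul,
      hexp]
  refine mem_cyclicAlgebra.2 fun i k => ?_
  rw [hexpand, hexpand, add_sub_add_right_eq_sub, ← ha i k]
  ext g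
  simp [HahnSeries.coeff_single, apply_ite τ]

end CyclicAlgebra

section RankOverDivisionRing

variable {ι κ ν δ D E : Type*}

lemma comp_map_mul [Fintype κ] [Fintype δ] [DecidableEq δ] [Semiring D] [Semiring E]
    (φ : D →+* Matrix δ δ E) (M : Matrix ι κ D) (N : Matrix κ ν D) :
    comp _ _ _ _ _ ((M * N).map φ) = comp _ _ _ _ _ (M.map φ) * comp _ _ _ _ _ (N.map φ) := by
  ext p q
  simp only [comp_apply, map_apply, mul_apply, map_sum, map_mul, Fintype.sum_prod_type,
    Matrix.sum_apply]

lemma exists_rank_factorization [Fintype ι] [Fintype κ] [DivisionRing D] (M : Matrix ι κ D) :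
    ∃ (s : ℕ) (P : Matrix ι (Fin s) D) (Q : Matrix (Fin s) κ D) (P' : Matrix (Fin s) ι D)
      (Q' : Matrix κ (Fin s) D), M = P * Q ∧ P' * P = 1 ∧ Q * Q' = 1 := by
  classical
  let f : (ι → D) →ₗ[D] (κ → D) := toLinearMapRight' M
  let e := (Module.finBasis D (LinearMap.range f)).equivFun
  let π := e.toLinearMap ∘ₗ f.rangeRestrict
  let inc := (LinearMap.range f).subtype ∘ₗ e.symm.toLinearMap
  obtain ⟨π', hπ'⟩ := π.exists_rightInverse_of_surjective
    (LinearMap.range_eq_top.2 (e.surjective.comp f.surjective_rangeRestrict))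
  obtain ⟨inc', hinc'⟩ := inc.exists_leftInverse_of_injective
    (LinearMap.ker_eq_bot.2 (Subtype.val_injective.comp e.symm.injective))
  have hf : f = inc ∘ₗ π := LinearMap.ext fun x => by simp [inc, π]
  refine ⟨_, LinearMap.toMatrixRight' π, LinearMap.toMatrixRight' inc,
    LinearMap.toMatrixRight' π', LinearMap.toMatrixRight' inc', ?_, ?_, ?_⟩
  · rw [← LinearMap.toMatrixRight'_comp, ← hf]
    exact (LinearMap.toMatrixRight'.right_inv M).symm
  · rw [← LinearMap.toMatrixRight'_comp, hπ', LinearMap.toMatrixRight'_id]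
  · rw [← LinearMap.toMatrixRight'_comp, hinc', LinearMap.toMatrixRight'_id]

lemma card_dvd_rank_comp_map [Finite ι] [Fintype κ] [Fintype δ] [DecidableEq δ] [DivisionRing D]
    [Field E] (φ : D →+* Matrix δ δ E) (M : Matrix ι κ D) :
    Fintype.card δ ∣ (comp _ _ _ _ _ (M.map φ)).rank := by
  cases nonempty_fintype ι
  obtain ⟨s, P, Q, P', Q', hM, hP, hQ⟩ := exists_rank_factorization M
  have hcard : Fintype.card (Fin s × δ) = Fintype.card δ * s := by simp [mul_comm]
  have hone : (comp _ _ _ _ _ ((P' * M * Q').map φ)) = (1 : Matrix (Fin s × δ) (Fin s × δ) E) := by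
    rw [hM, ← Matrix.mul_assoc, hP, Matrix.one_mul, hQ, Matrix.map_one _ (map_zero φ) (map_one φ),
      comp_one]
  refine ⟨s, le_antisymm ?_ ?_⟩
  · rw [hM, comp_map_mul, ← hcard]
    exact (rank_mul_le_left _ _).trans (rank_le_card_width _)
  · rw [← hcard, ← rank_one (R := E), ← hone, comp_map_mul, comp_map_mul]
    exact (rank_mul_le_left _ _).trans (rank_mul_le_right _ _)

end RankOverDivisionRing

section RankOfSpecialization

variable {α β : Type*} [Fintype β]

lemma exists_linearIndependent_row_submatrix [Finite α] {F : Type*} [Field F] (M : Matrix α β F) :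
    ∃ f : Fin M.rank → α, LinearIndependent F (M.submatrix f id).row := by
  cases nonempty_fintype α
  have hspan := Submodule.exists_fun_fin_finrank_span_eq F (Set.range M.row)
  rw [← rank_eq_finrank_span_row] at hspan
  obtain ⟨r, hr, -, hli⟩ := hspan
  choose f hf using hr
  exact ⟨f, (funext hf : (M.submatrix f id).row = r) ▸ hli⟩

lemma exists_det_submatrix_ne_zero [Finite α] {F : Type*} [Field F] (M : Matrix α β F) :
    ∃ (f : Fin M.rank → α) (g : Fin M.rank → β), (M.submatrix f g).det ≠ 0 := by
  obtain ⟨f, hf⟩ := exists_linearIndependent_row_submatrix M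
  have hrank : (M.submatrix f id)ᵀ.rank = M.rank := by
    rw [rank_transpose, hf.rank_matrix, Fintype.card_fin]
  obtain ⟨g, hg⟩ := exists_linearIndependent_row_submatrix (M.submatrix f id)ᵀ
  have hdet := hg.comp _ (finCongr hrank.symm).injective
  change LinearIndependent F ((M.submatrix f (g ∘ finCongr hrank.symm))ᵀ).row at hdet
  rw [linearIndependent_rows_iff_isUnit, isUnit_iff_isUnit_det, isUnit_iff_ne_zero,
    det_transpose] at hdet
  exact ⟨f, _, hdet⟩

lemma le_rank_of_det_submatrix_ne_zero {F : Type*} [Field F] {r : ℕ} {M : Matrix α β F}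
    {f : Fin r → α} {g : Fin r → β} (h : (M.submatrix f g).det ≠ 0) : r ≤ M.rank := by
  simpa [rank_of_det_ne_zero h] using rank_submatrix_le M f g

lemma rank_map_le_rank_map_of_injective [Finite α] {R E F : Type*} [CommRing R] [Field E] [Field F]
    {f : R →+* E} (hf : Function.Injective f) (g : R →+* F) (P : Matrix α β R) :
    (P.map g).rank ≤ (P.map f).rank := by
  obtain ⟨r, c, hdet⟩ := exists_det_submatrix_ne_zero (P.map g)
  refine le_rank_of_det_submatrix_ne_zero (f := r) (g := c) fun h => hdet ?_
  rw [submatrix_map, ← RingHom.mapMatrix_apply, ← RingHom.map_det] at h ⊢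
  have hzero : (P.submatrix r c).det = 0 := (map_eq_zero_iff f hf).1 h
  rw [hzero, map_zero]

lemma exists_rank_map_le_rank_map_eval [Finite α] {K E τ : Type*} [Field K] [Infinite K] [Field E]
    (f : MvPolynomial τ K →+* E) (P : Matrix α β (MvPolynomial τ K)) :
    ∃ z : τ → K, (P.map f).rank ≤ (P.map (eval z)).rank := by
  obtain ⟨r, c, hdet⟩ := exists_det_submatrix_ne_zero (P.map f)
  rw [submatrix_map, ← RingHom.mapMatrix_apply, ← RingHom.map_det] at hdet
  obtain ⟨z, hz⟩ : ∃ z, eval z (P.submatrix r c).det ≠ 0 := by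
    by_contra! h
    have hzero : (P.submatrix r c).det = 0 := MvPolynomial.funext (by simpa using h)
    exact hdet (by rw [hzero, map_zero])
  refine ⟨z, le_rank_of_det_submatrix_ne_zero (f := r) (g := c) ?_⟩
  rwa [submatrix_map, ← RingHom.mapMatrix_apply, ← RingHom.map_det]

end RankOfSpecialization

section Regularity

lemma exists_injective_ringHom_hahnSeries {α K : Type*} [Field K] (w : α → ℕ) :
    ∃ f : MvPolynomial α K →+* HahnSeries ℤ (FractionRing (MvPolynomial α K)),
      Function.Injective f ∧
        (∀ c : K, f (C c) = HahnSeries.C (algebraMap (MvPolynomial α K) _ (C c))) ∧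
        ∀ p : α, f (X p) = HahnSeries.single (w p : ℤ) (algebraMap (MvPolynomial α K) _ (X p)) := by
  let g : MvPolynomial α K →+* Polynomial (MvPolynomial α K) :=
    eval₂Hom (Polynomial.C.comp C) fun p => Polynomial.C (X p) * Polynomial.X ^ w p
  have hg : Function.Injective g := by
    have hid : (Polynomial.evalRingHom 1).comp g = RingHom.id _ := by
      ext p <;> simp [g]
    exact Function.LeftInverse.injective (RingHom.congr_fun hid)
  let h := ((HahnSeries.ofPowerSeries ℤ (FractionRing (MvPolynomial α K))).comp
    Polynomial.coeToPowerSeries.ringHom).comp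
      (Polynomial.mapRingHom (algebraMap (MvPolynomial α K) _))
  have hh : Function.Injective h :=
    (HahnSeries.ofPowerSeries_injective.comp (Polynomial.coe_injective _)).comp
      (Polynomial.map_injective _ (IsFractionRing.injective _ _))
  refine ⟨h.comp g, hh.comp hg, fun c => ?_, fun p => ?_⟩
  · simp [h, g]
  · simp [h, g, HahnSeries.ofPowerSeries_X_pow, HahnSeries.C_apply, HahnSeries.single_mul_single]

/-- The blow-up `∑ T_l ⊗ x_l` of a tuple of matrices `x` by a tuple of matrices `T`. -/
def blowUp {σ R ι κ δ ε : Type*} [Fintype σ] [CommSemiring R] (x : σ → Matrix ι κ R)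
    (T : σ → Matrix δ ε R) : Matrix (δ × ι) (ε × κ) R :=
  ∑ l, T l ⊗ₖ x l

lemma blowUp_apply {σ R ι κ δ ε : Type*} [Fintype σ] [CommSemiring R] (x : σ → Matrix ι κ R)
    (T : σ → Matrix δ ε R) (p : δ × ι) (q : ε × κ) :
    blowUp x T p q = ∑ l, T l p.1 q.1 * x l p.2 q.2 := by
  simp [blowUp, Matrix.sum_apply]

lemma blowUp_map {σ R S ι κ δ ε : Type*} [Fintype σ] [CommSemiring R] [CommSemiring S]
    (f : R →+* S) (x : σ → Matrix ι κ R) (T : σ → Matrix δ ε R) :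
    (blowUp x T).map f = blowUp (fun l => (x l).map f) fun l => (T l).map f := by
  ext p q
  simp [blowUp_apply]

lemma exists_generic_mem_cyclicAlgebra (σ K : Type*) [Field K] (d : ℕ) [NeZero d] :
    ∃ (τ : _ →+* _) (f : MvPolynomial (σ × ZMod d × ZMod d) K →+*
        HahnSeries ℤ (FractionRing (MvPolynomial (σ × ZMod d × ZMod d) K))),
      Function.Injective f ∧ (∀ c, ∀ M ∈ cyclicAlgebra d τ, f (C c) • M ∈ cyclicAlgebra d τ) ∧
        ∀ l, (of fun i k => f (X (l, i, k))) ∈ cyclicAlgebra d τ := by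
  let shift : σ × ZMod d × ZMod d → σ × ZMod d × ZMod d := fun p => (p.1, p.2.1 - 1, p.2.2 - 1)
  have hshift : Function.Injective shift := fun p q h => by
    simpa [shift, Prod.ext_iff] using h
  have hrename : Function.Injective ((algebraMap (MvPolynomial (σ × ZMod d × ZMod d) K)
      (FractionRing (MvPolynomial (σ × ZMod d × ZMod d) K))).comp
        (rename (R := K) shift).toRingHom) :=
    (IsFractionRing.injective _ _).comp (rename_injective _ hshift)
  let τ := IsFractionRing.lift (K := FractionRing (MvPolynomial (σ × ZMod d × ZMod d) K)) hrename
  obtain ⟨f, hf, hC, hX⟩ := exists_injective_ringHom_hahnSeries (K := K)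
    fun p : σ × ZMod d × ZMod d => ((p.2.2 - p.2.1).val + p.2.1.val) / d
  refine ⟨τ, f, hf, fun c M hM => ?_, fun l => ?_⟩
  · rw [hC]
    exact C_smul_mem_cyclicAlgebra (by simp [τ]) hM
  · simp only [hX]
    exact single_mem_cyclicAlgebra fun i k => by simp [τ, shift]

lemma dvd_rank_map_blowUp_of_mem_subring {σ ι κ K E : Type*} [Fintype σ] [Finite ι] [Fintype κ]
    {d : ℕ} [NeZero d] [CommRing K] [Field E] (D : Subring (Matrix (ZMod d) (ZMod d) E))
    (hD : ∀ M : D, IsUnit M ∨ M = 0) (f : K →+* E) (hsmul : ∀ c, ∀ M ∈ D, f c • M ∈ D)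
    (x : σ → Matrix ι κ K) {T : σ → Matrix (ZMod d) (ZMod d) E} (hT : ∀ l, T l ∈ D) :
    d ∣ (blowUp (fun l => (x l).map f) T).rank := by
  classical
  let : DivisionRing D := DivisionRing.ofIsUnitOrEqZero hD
  let M : Matrix ι κ D := of fun i j =>
    ⟨∑ l, f (x l i j) • T l, D.sum_mem fun l _ => hsmul _ _ (hT l)⟩
  have hM : blowUp (fun l => (x l).map f) T = (comp _ _ _ _ _ (M.map D.subtype)).submatrix
      (Equiv.prodComm _ _) (Equiv.prodComm _ _) := by
    ext p q
    simp [blowUp_apply, M, Matrix.sum_apply, mul_comm]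
  have hdvd := card_dvd_rank_comp_map D.subtype M
  rwa [ZMod.card, ← rank_submatrix _ (Equiv.prodComm _ _) (Equiv.prodComm _ _), ← hM] at hdvd

theorem exists_isGreatest_rank_blowUp {σ ι κ K : Type*} (δ : Type*) [Fintype σ] [Finite ι]
    [Fintype κ] [Fintype δ] [Nonempty δ] [Field K] [Infinite K] (x : σ → Matrix ι κ K) :
    ∃ s, IsGreatest (Set.range fun T : σ → Matrix δ δ K => (blowUp x T).rank)
      (Fintype.card δ * s) := by
  have : NeZero (Fintype.card δ) := ⟨Fintype.card_ne_zero⟩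
  let e : δ ≃ ZMod (Fintype.card δ) := Fintype.equivOfCardEq (ZMod.card _).symm
  obtain ⟨τ, f, hf, hsmul, hmem⟩ := exists_generic_mem_cyclicAlgebra σ K (Fintype.card δ)
  let P := blowUp (fun l => (x l).map C) fun l =>
    of fun i k : δ => (X (l, e i, e k) : MvPolynomial _ K)
  have heval (z) : P.map (eval z) = blowUp x fun l => of fun i k => z (l, e i, e k) := by
    ext p q
    simp [P, blowUp_apply]
  obtain ⟨s, hs⟩ : Fintype.card δ ∣ (P.map f).rank := by
    have hdvd := dvd_rank_map_blowUp_of_mem_subring _ isUnit_or_eq_zero_of_cyclicAlgebra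
      (f.comp C) hsmul x hmem
    rw [← rank_submatrix _ (e.prodCongr (Equiv.refl ι)) (e.prodCongr (Equiv.refl κ))] at hdvd
    have hP : P.map f = (blowUp (fun l => (x l).map (f.comp C)) fun l => of fun i k =>
        f (X (l, i, k))).submatrix (e.prodCongr (Equiv.refl ι)) (e.prodCongr (Equiv.refl κ)) := by
      ext1 p q
      simp [P, blowUp_apply]
    rwa [hP]
  obtain ⟨z, hz⟩ := exists_rank_map_le_rank_map_eval f P
  refine ⟨s, ⟨fun l => of fun i k => z (l, e i, e k), ?_⟩, ?_⟩
  · have hrank := (rank_map_le_rank_map_of_injective hf (eval z) P).antisymm hz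
    rwa [heval, hs] at hrank
  · rintro _ ⟨T, rfl⟩
    have hT := rank_map_le_rank_map_of_injective hf
      (eval fun p => T p.1 (e.symm p.2.1) (e.symm p.2.2)) P
    rw [hs, heval] at hT
    simp only [Equiv.symm_apply_apply] at hT
    exact hT

end Regularity

section BlockRank

variable {α β α' β' K : Type*} [Fintype β] [Field K]

lemma finrank_ker_toBlocks₂₂_le_of_mul_eq_one [DecidableEq α] [DecidableEq β] [Fintype α']
    [Fintype β'] {M : Matrix (α' ⊕ β') (α ⊕ β) K} {N : Matrix (α ⊕ β) (α' ⊕ β') K} (h : N * M = 1) :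
    Module.finrank K (LinearMap.ker M.toBlocks₂₂.mulVecLin) ≤
      Module.finrank K (LinearMap.ker N.toBlocks₁₁.mulVecLin) := by
  rw [← fromBlocks_toBlocks M, ← fromBlocks_toBlocks N, fromBlocks_multiply, ← fromBlocks_one,
    fromBlocks_inj] at h
  obtain ⟨-, h₁₂, -, h₂₂⟩ := h
  let f : LinearMap.ker M.toBlocks₂₂.mulVecLin →ₗ[K] LinearMap.ker N.toBlocks₁₁.mulVecLin :=
    M.toBlocks₁₂.mulVecLin.restrict fun z hz => by
      have hz' := congrArg (· *ᵥ z) h₁₂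
      simp only [add_mulVec, ← mulVec_mulVec, zero_mulVec] at hz'
      rwa [show M.toBlocks₂₂ *ᵥ z = 0 from hz, mulVec_zero, add_zero] at hz'
  have hf (z : LinearMap.ker M.toBlocks₂₂.mulVecLin) : N.toBlocks₂₁ *ᵥ (f z : α' → K) = z := by
    have hz' := congrArg (· *ᵥ (z : β → K)) h₂₂
    simp only [add_mulVec, ← mulVec_mulVec, one_mulVec] at hz'
    rwa [show M.toBlocks₂₂ *ᵥ (z : β → K) = 0 from z.2, mulVec_zero, add_zero] at hz'
  exact LinearMap.finrank_le_finrank_of_injective (f := f) fun z w h =>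
    Subtype.ext (by rw [← hf z, ← hf w, h])

variable [Fintype α]

lemma rank_add_finrank_ker_mulVecLin (M : Matrix α' α K) :
    M.rank + Module.finrank K (LinearMap.ker M.mulVecLin) = Fintype.card α :=
  (LinearMap.finrank_range_add_finrank_ker M.mulVecLin).trans (Module.finrank_fintype_fun_eq_card K)

lemma isUnit_of_rank_eq_card [DecidableEq α] {M : Matrix α α K} (h : M.rank = Fintype.card α) :
    IsUnit M := by
  have hker := rank_add_finrank_ker_mulVecLin M
  rw [h, Nat.add_eq_left, Submodule.finrank_eq_zero, LinearMap.ker_eq_bot] at hker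
  exact mulVec_injective_iff_isUnit.1 hker

variable (P : Matrix α' α K) (Q : Matrix β' α K) (S : Matrix β' β K)

lemma fromBlocks_zero₁₂_mulVec_eq_zero_iff {z : α ⊕ β → K} :
    fromBlocks P 0 Q S *ᵥ z = 0 ↔
      P *ᵥ (z ∘ Sum.inl) = 0 ∧ Q *ᵥ (z ∘ Sum.inl) + S *ᵥ (z ∘ Sum.inr) = 0 := by
  simp [fromBlocks_mulVec, funext_iff]

lemma map_inl_ker_fromBlocks_zero₁₂_le :
    (LinearMap.ker (fromBlocks P 0 Q S).mulVecLin).map (LinearMap.funLeft K K Sum.inl) ≤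
      LinearMap.ker P.mulVecLin := by
  rintro _ ⟨z, hz, rfl⟩
  exact ((fromBlocks_zero₁₂_mulVec_eq_zero_iff P Q S).1 hz).1

lemma finrank_ker_fromBlocks_zero₁₂_le :
    Module.finrank K (LinearMap.ker (fromBlocks P 0 Q S).mulVecLin) ≤
      Module.finrank K ((LinearMap.ker (fromBlocks P 0 Q S).mulVecLin).map
        (LinearMap.funLeft K K Sum.inl)) + Module.finrank K (LinearMap.ker S.mulVecLin) := by
  let N := LinearMap.ker (fromBlocks P 0 Q S).mulVecLin
  let res := (LinearMap.funLeft K K (Sum.inl : α → α ⊕ β)).domRestrict N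
  have hinl (z : LinearMap.ker res) : (z : α ⊕ β → K) ∘ Sum.inl = 0 := z.2
  let f : LinearMap.ker res →ₗ[K] LinearMap.ker S.mulVecLin :=
    LinearMap.codRestrict _ (LinearMap.funLeft K K Sum.inr ∘ₗ N.subtype ∘ₗ Submodule.subtype _)
      fun z => by
        have hz := ((fromBlocks_zero₁₂_mulVec_eq_zero_iff P Q S).1 z.1.2).2
        rwa [hinl, mulVec_zero, zero_add] at hz
  have hf : Function.Injective f := fun z w h => by
    refine Subtype.ext (Subtype.ext (funext (Sum.rec (fun i => ?_) fun i => ?_)))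
    · exact (congrFun (hinl z) i).trans (congrFun (hinl w) i).symm
    · exact congrFun (congrArg Subtype.val h) i
  rw [← LinearMap.range_domRestrict, ← LinearMap.finrank_range_add_finrank_ker res]
  exact Nat.add_le_add_left (LinearMap.finrank_le_finrank_of_injective hf) _

lemma rank_add_rank_le_rank_fromBlocks_zero₁₂ :
    P.rank + S.rank ≤ (fromBlocks P 0 Q S).rank := by
  have hP := rank_add_finrank_ker_mulVecLin P
  have hS := rank_add_finrank_ker_mulVecLin S
  have hB := rank_add_finrank_ker_mulVecLin (fromBlocks P 0 Q S)
  have hle := Submodule.finrank_mono (map_inl_ker_fromBlocks_zero₁₂_le P Q S)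
  have hker := finrank_ker_fromBlocks_zero₁₂_le P Q S
  rw [Fintype.card_sum] at hB
  omega

lemma exists_mulVec_add_mulVec_eq_zero_of_rank_fromBlocks_le
    (h : (fromBlocks P 0 Q S).rank ≤ P.rank + S.rank) {z : α → K} (hz : P *ᵥ z = 0) :
    ∃ y : β → K, Q *ᵥ z + S *ᵥ y = 0 := by
  have hP := rank_add_finrank_ker_mulVecLin P
  have hS := rank_add_finrank_ker_mulVecLin S
  have hB := rank_add_finrank_ker_mulVecLin (fromBlocks P 0 Q S)
  have hker := finrank_ker_fromBlocks_zero₁₂_le P Q S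
  rw [Fintype.card_sum] at hB
  have heq := Submodule.eq_of_le_of_finrank_le (map_inl_ker_fromBlocks_zero₁₂_le P Q S) (by omega)
  obtain ⟨y, hy, rfl⟩ : z ∈ (LinearMap.ker (fromBlocks P 0 Q S).mulVecLin).map
    (LinearMap.funLeft K K Sum.inl) := heq ▸ hz
  exact ⟨_, ((fromBlocks_zero₁₂_mulVec_eq_zero_iff P Q S).1 hy).2⟩

end BlockRank

section BlowUp

variable {σ K ι κ : Type*} [Fintype σ] [Field K]

@[simp]
lemma blowUp_zero {δ ε : Type*} (x : σ → Matrix ι κ K) :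
    blowUp x (0 : σ → Matrix δ ε K) = 0 := by
  ext
  simp [blowUp_apply]

lemma blowUp_submatrix {δ ε δ' ε' : Type*} (x : σ → Matrix ι κ K) (T : σ → Matrix δ ε K)
    (r : δ' → δ) (c : ε' → ε) :
    blowUp x (fun l => (T l).submatrix r c) =
      (blowUp x T).submatrix (Prod.map r id) (Prod.map c id) := by
  ext1 p q
  simp [blowUp_apply]

lemma blowUp_fromBlocks {δ ε δ' ε' : Type*} (x : σ → Matrix ι κ K) (A : σ → Matrix δ ε K)
    (B : σ → Matrix δ ε' K) (C : σ → Matrix δ' ε K) (D : σ → Matrix δ' ε' K) :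
    blowUp x (fun l => fromBlocks (A l) (B l) (C l) (D l)) =
      (fromBlocks (blowUp x A) (blowUp x B) (blowUp x C) (blowUp x D)).submatrix
        (Equiv.sumProdDistrib δ δ' ι) (Equiv.sumProdDistrib ε ε' κ) := by
  ext ⟨_ | _, _⟩ ⟨_ | _, _⟩ <;> simp [blowUp_apply]

lemma blowUp_mulVec {δ ε : Type*} [Fintype κ] [Fintype ε] (x : σ → Matrix ι κ K)
    (T : σ → Matrix δ ε K) (z : ε × κ → K) (d : δ) :
    (fun i => (blowUp x T *ᵥ z) (d, i)) = ∑ l, ∑ e, T l d e • (x l *ᵥ fun k => z (e, k)) := by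
  ext i
  simp only [mulVec, dotProduct, blowUp_apply, Fintype.sum_prod_type, Finset.sum_apply,
    Pi.smul_apply, smul_eq_mul, Finset.sum_mul, Finset.mul_sum, mul_assoc]
  exact (Finset.sum_congr rfl fun _ _ => Finset.sum_comm).trans Finset.sum_comm

variable [Fintype κ]

lemma rank_blowUp_le {δ ε : Type*} [Fintype ε] (x : σ → Matrix ι κ K) (T : σ → Matrix δ ε K) :
    (blowUp x T).rank ≤ Fintype.card ε * Fintype.card κ :=
  (rank_le_card_width _).trans_eq (Fintype.card_prod _ _)

lemma exists_forall_rank_blowUp_le [Finite ι] [Infinite K] (x : σ → Matrix ι κ K) :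
    ∃ D s : ℕ, 0 < D ∧ (∃ T : σ → Matrix (Fin D) (Fin D) K, (blowUp x T).rank = D * s) ∧
      ∀ (δ : Type) [Fintype δ] (T : σ → Matrix δ δ K), (blowUp x T).rank ≤ Fintype.card δ * s := by
  choose s hs using fun n => exists_isGreatest_rank_blowUp (Fin (n + 1)) x
  have hbound (n : ℕ) : s n ≤ Fintype.card κ := by
    obtain ⟨T, hT⟩ := (hs n).1
    exact Nat.le_of_mul_le_mul_left (hT.symm.trans_le (rank_blowUp_le x T)) (by simp)
  obtain ⟨_, ⟨n, rfl⟩, hn⟩ := ((Set.finite_Iic (Fintype.card κ)).subset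
    (Set.range_subset_iff.2 hbound)).exists_maximal (Set.range_nonempty s)
  refine ⟨n + 1, s n, n.succ_pos, by simpa using (hs n).1, fun δ _ T => ?_⟩
  rcases isEmpty_or_nonempty δ with _ | _
  · simpa using rank_blowUp_le x T
  let k := Fintype.card δ - 1
  have hk : Fintype.card δ = k + 1 := (Nat.sub_add_cancel Fintype.card_pos).symm
  let e : Fin (k + 1) ≃ δ := (Fintype.equivFinOfCardEq hk).symm
  have hT : (blowUp x fun l => (T l).submatrix e e).rank ≤ _ := (hs k).2 ⟨_, rfl⟩
  rw [Fintype.card_fin, blowUp_submatrix] at hT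
  have hrank :=
    rank_submatrix (blowUp x T) (e.prodCongr (Equiv.refl ι)) (e.prodCongr (Equiv.refl κ))
  rw [hk, ← hrank]
  exact hT.trans (Nat.mul_le_mul_left _ ((le_total _ _).elim id (hn ⟨k, rfl⟩)))

end BlowUp

section FullBlowUp

variable {σ K ι κ : Type*} [Field K]

/-- The subspace `U^δ` of `K^δ ⊗ K^κ = K^(δ × κ)`. -/
def slotwise (δ : Type*) (U : Submodule K (κ → K)) : Submodule K (δ × κ → K) :=
  (Submodule.pi Set.univ fun _ : δ => U).comap (LinearEquiv.curry K K δ κ).toLinearMap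

lemma mem_slotwise {δ : Type*} {U : Submodule K (κ → K)} {z : δ × κ → K} :
    z ∈ slotwise δ U ↔ ∀ d, (fun k => z (d, k)) ∈ U := by
  simp only [slotwise, Submodule.mem_comap, Submodule.mem_pi, Set.mem_univ, true_imp_iff]
  rfl

lemma finrank_slotwise (δ : Type*) [Fintype δ] [Finite κ] (U : Submodule K (κ → K)) :
    Module.finrank K (slotwise δ U) = Fintype.card δ * Module.finrank K U := by
  let e : slotwise δ U ≃ₗ[K] (δ → U) :=
    { toFun z d := ⟨fun k => z.1 (d, k), mem_slotwise.1 z.2 d⟩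
      map_add' _ _ := rfl
      map_smul' _ _ := rfl
      invFun z := ⟨fun p => (z p.1).1 p.2, mem_slotwise.2 fun d => (z d).2⟩
      left_inv _ := rfl
      right_inv _ := rfl }
  rw [e.finrank_eq, Module.finrank_pi_fintype]
  simp

/-- The inclusion of `K^κ` as the summand of index `d` in `K^(δ × κ)`. -/
def slotSingle {δ : Type*} [DecidableEq δ] (d : δ) : (κ → K) →ₗ[K] (δ × κ → K) :=
  (LinearEquiv.curry K K δ κ).symm.toLinearMap ∘ₗ LinearMap.single K (fun _ => κ → K) d

lemma slotSingle_apply {δ : Type*} [DecidableEq δ] (d : δ) (u : κ → K) (p : δ × κ) :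
    slotSingle d u p = if p.1 = d then u p.2 else 0 := by
  rw [← Pi.single_apply d (u p.2), ← Pi.apply_single (fun _ (v : κ → K) => v p.2)]
  · rfl
  · simp

lemma slotwise_le {δ : Type*} [Finite δ] [DecidableEq δ] {U : Submodule K (κ → K)}
    {V : Submodule K (δ × κ → K)} (h : ∀ d, U.map (slotSingle d) ≤ V) : slotwise δ U ≤ V := by
  cases nonempty_fintype δ
  intro z hz
  have hsum : z = ∑ d, slotSingle d fun k => z (d, k) := by
    ext p
    simp [slotSingle_apply]
  rw [hsum]
  exact V.sum_mem fun d _ => h d ⟨_, mem_slotwise.1 hz d, rfl⟩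

/-- A tuple of matrices has no shrunk subspace if no subspace `U` is mapped by the whole tuple into
a subspace of smaller dimension. -/
def NoShrunkSubspace [Fintype κ] (x : σ → Matrix ι κ K) : Prop :=
  ∀ U : Submodule K (κ → K),
    Module.finrank K U ≤ Module.finrank K (⨆ l, U.map (x l).mulVecLin : Submodule K (ι → K))

/-- The span of all slot components of the kernel vectors of those blow-ups of `x` whose rank is
`s` times their size. -/
def optimalKernelSpan [Fintype σ] [Fintype κ] (x : σ → Matrix ι κ K) (s : ℕ) :
    Submodule K (κ → K) :=
  Submodule.span K {u | ∃ (δ : Type) (_ : Fintype δ) (T : σ → Matrix δ δ K) (z : δ × κ → K) (d : δ),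
    (blowUp x T).rank = Fintype.card δ * s ∧ blowUp x T *ᵥ z = 0 ∧ u = fun k => z (d, k)}

variable [Fintype σ] [Fintype κ] {x : σ → Matrix ι κ K} {s : ℕ}

lemma mem_slotwise_optimalKernelSpan {δ : Type} [Fintype δ] {T : σ → Matrix δ δ K}
    (hT : (blowUp x T).rank = Fintype.card δ * s) {z : δ × κ → K} (hz : blowUp x T *ᵥ z = 0) :
    z ∈ slotwise δ (optimalKernelSpan x s) := by
  refine mem_slotwise.2 fun d => Submodule.subset_span ?_
  exact ⟨δ, inferInstance, T, z, d, hT, hz, rfl⟩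

lemma blowUp_single_mulVec [DecidableEq σ] {δ ε : Type*} [DecidableEq δ] [DecidableEq ε]
    [Fintype ε] (l : σ) (d : δ) (e : ε) (z : ε × κ → K) :
    blowUp x (Pi.single l (Matrix.single d e (1 : K))) *ᵥ z =
      slotSingle d (x l *ᵥ fun k => z (e, k)) := by
  ext ⟨d', i⟩
  refine (congrFun (blowUp_mulVec x _ z d') i).trans ?_
  rw [Fintype.sum_eq_single l fun k hk => by simp [Pi.single_eq_of_ne hk],
    Fintype.sum_eq_single e fun k hk => by simp [hk.symm]]
  simp [slotSingle_apply, Matrix.single_apply, eq_comm]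

lemma exists_mem_slotwise_blowUp_mulVec_add_eq_zero
    (hmax : ∀ (δ : Type) [Fintype δ] (T : σ → Matrix δ δ K),
      (blowUp x T).rank ≤ Fintype.card δ * s)
    {δ ε : Type} [Fintype δ] [Fintype ε] {T : σ → Matrix δ δ K} {T₀ : σ → Matrix ε ε K}
    (hT : (blowUp x T).rank = Fintype.card δ * s) (hT₀ : (blowUp x T₀).rank = Fintype.card ε * s)
    (N : σ → Matrix ε δ K) {z : δ × κ → K} (hz : blowUp x T *ᵥ z = 0) :
    ∃ y, blowUp x N *ᵥ z + blowUp x T₀ *ᵥ y = 0 ∧ y ∈ slotwise ε (optimalKernelSpan x s) := by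
  let S : σ → Matrix (δ ⊕ ε) (δ ⊕ ε) K := fun k => fromBlocks (T k) 0 (N k) (T₀ k)
  have hS : blowUp x S = (fromBlocks (blowUp x T) 0 (blowUp x N) (blowUp x T₀)).submatrix
      (Equiv.sumProdDistrib δ ε ι) (Equiv.sumProdDistrib δ ε κ) := by
    rw [← blowUp_zero (δ := δ) (ε := ε) x, ← blowUp_fromBlocks]
    rfl
  have hrank : (blowUp x S).rank = _ := hS ▸ rank_submatrix _ _ _
  have hle : (blowUp x S).rank ≤ (blowUp x T).rank + (blowUp x T₀).rank := by
    simpa [hT, hT₀, add_mul] using hmax _ S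
  obtain ⟨y, hy⟩ := exists_mulVec_add_mulVec_eq_zero_of_rank_fromBlocks_le _ _ _ (hrank ▸ hle) hz
  have hzy : blowUp x S *ᵥ (Sum.elim z y ∘ Equiv.sumProdDistrib δ ε κ) = 0 := by
    rw [hS, submatrix_mulVec_equiv, Function.comp_assoc, Equiv.self_comp_symm, Function.comp_id,
      (fromBlocks_zero₁₂_mulVec_eq_zero_iff _ _ _).2 ⟨hz, hy⟩]
    rfl
  have hSs : (blowUp x S).rank = Fintype.card (δ ⊕ ε) * s := by
    refine (hmax _ S).antisymm ?_
    rw [hrank, Fintype.card_sum, add_mul, ← hT, ← hT₀]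
    exact rank_add_rank_le_rank_fromBlocks_zero₁₂ _ _ _
  exact ⟨y, hy, mem_slotwise.2 fun d =>
    mem_slotwise.1 (mem_slotwise_optimalKernelSpan hSs hzy) (Sum.inr d)⟩

lemma slotSingle_mulVec_mem_map_blowUp
    (hmax : ∀ (δ : Type) [Fintype δ] (T : σ → Matrix δ δ K),
      (blowUp x T).rank ≤ Fintype.card δ * s)
    {ε : Type} [Fintype ε] [DecidableEq ε] {T₀ : σ → Matrix ε ε K}
    (hT₀ : (blowUp x T₀).rank = Fintype.card ε * s) (l : σ) (d : ε) {u : κ → K}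
    (hu : u ∈ optimalKernelSpan x s) :
    slotSingle d (x l *ᵥ u) ∈
      (slotwise ε (optimalKernelSpan x s)).map (blowUp x T₀).mulVecLin := by
  classical
  suffices h : optimalKernelSpan x s ≤ ((slotwise ε (optimalKernelSpan x s)).map
      (blowUp x T₀).mulVecLin).comap (slotSingle d ∘ₗ (x l).mulVecLin) from h hu
  refine Submodule.span_le.2 ?_
  rintro _ ⟨δ, _, T, z, e, hT, hz, rfl⟩
  obtain ⟨y, hy, hyU⟩ := exists_mem_slotwise_blowUp_mulVec_add_eq_zero hmax hT hT₀
    (Pi.single l (Matrix.single d e 1)) hz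
  rw [blowUp_single_mulVec] at hy
  exact ⟨-y, neg_mem hyU, by simpa [mulVec_neg, neg_eq_iff_add_eq_zero, add_comm] using hy⟩

lemma exists_rank_blowUp_eq_of_noShrunkSubspace [Finite ι] [Infinite K] (hx : NoShrunkSubspace x) :
    ∃ (D : ℕ) (T : σ → Matrix (Fin D) (Fin D) K),
      0 < D ∧ (blowUp x T).rank = D * Fintype.card κ := by
  obtain ⟨D, s, hD, ⟨T, hT⟩, hmax⟩ := exists_forall_rank_blowUp_le x
  refine ⟨D, T, hD, ?_⟩
  replace hT : (blowUp x T).rank = Fintype.card (Fin D) * s := by rwa [Fintype.card_fin]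
  set U := optimalKernelSpan x s
  have hker : LinearMap.ker (blowUp x T).mulVecLin ≤ slotwise (Fin D) U :=
    fun z hz => mem_slotwise_optimalKernelSpan hT hz
  have hle : slotwise (Fin D) (⨆ l, U.map (x l).mulVecLin) ≤
      (slotwise (Fin D) U).map (blowUp x T).mulVecLin := by
    refine slotwise_le fun d => Submodule.map_le_iff_le_comap.2 (iSup_le fun l => ?_)
    rintro _ ⟨u, hu, rfl⟩
    exact slotSingle_mulVec_mem_map_blowUp hmax hT l d hu
  have hdim : Module.finrank K (slotwise (Fin D) U) ≤
      Module.finrank K ((slotwise (Fin D) U).map (blowUp x T).mulVecLin) := by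
    refine le_trans ?_ (Submodule.finrank_mono hle)
    rw [finrank_slotwise, finrank_slotwise]
    exact Nat.mul_le_mul_left _ (hx U)
  have hbot := disjoint_self.1 ((Submodule.disjoint_ker_of_finrank_le _ hdim).mono_left hker)
  have hrank := rank_add_finrank_ker_mulVecLin (blowUp x T)
  rwa [hbot, finrank_bot, add_zero, Fintype.card_prod, Fintype.card_fin] at hrank

end FullBlowUp

section InvertibleBlowUp

variable {σ K ι : Type*} [Fintype σ] [Field K] [Fintype ι] [DecidableEq ι]

/-- The tuple `x` of square matrices has an invertible blow-up `∑ l, T l ⊗ x l` with coefficient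
matrices `T l` of size `d`. -/
def HasInvertibleBlowUp (x : σ → Matrix ι ι K) (d : ℕ) : Prop :=
  ∃ T : σ → Matrix (Fin d) (Fin d) K, IsUnit (blowUp x T)

variable {x : σ → Matrix ι ι K}

lemma hasInvertibleBlowUp_card {δ : Type*} [Fintype δ] [DecidableEq δ] {T : σ → Matrix δ δ K}
    (hT : IsUnit (blowUp x T)) : HasInvertibleBlowUp x (Fintype.card δ) := by
  let e := (Fintype.equivFin δ).symm
  refine ⟨fun l => (T l).submatrix e e, ?_⟩
  rw [blowUp_submatrix]
  exact (isUnit_submatrix_equiv (e.prodCongr (Equiv.refl ι)) (e.prodCongr (Equiv.refl ι))).2 hT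

lemma HasInvertibleBlowUp.add {d e : ℕ} (hd : HasInvertibleBlowUp x d)
    (he : HasInvertibleBlowUp x e) : HasInvertibleBlowUp x (d + e) := by
  obtain ⟨S, hS⟩ := hd
  obtain ⟨T, hT⟩ := he
  have hST : IsUnit (blowUp x fun l => fromBlocks (S l) 0 0 (T l)) := by
    refine (congrArg IsUnit (blowUp_fromBlocks x S 0 0 T)).mpr ((isUnit_submatrix_equiv _ _).2 ?_)
    rw [blowUp_zero, isUnit_fromBlocks_zero₁₂]
    exact ⟨hS, hT⟩
  simpa using hasInvertibleBlowUp_card hST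

lemma HasInvertibleBlowUp.mul {d : ℕ} (hd : HasInvertibleBlowUp x d) (k : ℕ) :
    HasInvertibleBlowUp x (k * d) := by
  induction k with
  | zero => exact ⟨fun _ => 0, by rw [zero_mul]; exact isUnit_of_subsingleton _⟩
  | succ k ih => rw [add_mul, one_mul]; exact ih.add hd

omit [DecidableEq ι] in
lemma finrank_ker_mulVecLin_lt_of_ne_zero {M : Matrix ι ι K} (hM : M ≠ 0) :
    Module.finrank K (LinearMap.ker M.mulVecLin) < Fintype.card ι := by
  classical
  rw [← Module.finrank_fintype_fun_eq_card K]
  exact Submodule.finrank_lt fun h => hM (toLin'.map_eq_zero_iff.1 (LinearMap.ker_eq_top.1 h))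

lemma exists_finrank_ker_blowUp_succAbove_lt [Nonempty ι] {e : ℕ}
    {T : σ → Matrix (Fin (e + 1)) (Fin (e + 1)) K} (hT : IsUnit (blowUp x T)) :
    ∃ r c : Fin (e + 1), Module.finrank K (LinearMap.ker (blowUp x fun l =>
      (T l).submatrix r.succAbove c.succAbove).mulVecLin) < Fintype.card ι := by
  obtain ⟨N, hN⟩ := hT.exists_left_inv
  obtain ⟨i⟩ := ‹Nonempty ι›
  have hrow : ∃ p, N (0, i) p ≠ 0 := by
    by_contra! h
    have := congrFun (congrFun hN (0, i)) (0, i)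
    simp [mul_apply, h] at this
  obtain ⟨⟨r, j⟩, hr⟩ := hrow
  let split (k : Fin (e + 1)) : ι ⊕ Fin e × ι ≃ Fin (e + 1) × ι :=
    (((finSuccEquiv' k).prodCongr (Equiv.refl ι)).trans optionProdEquiv).symm
  have hinv : N.submatrix (split 0) (split r) * (blowUp x T).submatrix (split r) (split 0) = 1 := by
    rw [submatrix_mul_equiv, hN, submatrix_one_equiv]
  refine ⟨r, 0, lt_of_le_of_lt ?_ (finrank_ker_mulVecLin_lt_of_ne_zero
    (M := (N.submatrix (split 0) (split r)).toBlocks₁₁) fun h => hr ?_)⟩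
  · have hblock : (blowUp x fun l => (T l).submatrix r.succAbove (Fin.succAbove 0)) =
        ((blowUp x T).submatrix (split r) (split 0)).toBlocks₂₂ := by
      ext p q
      simp [split, blowUp_apply, toBlocks₂₂]
    rw [hblock]
    exact finrank_ker_toBlocks₂₂_le_of_mul_eq_one hinv
  · simpa [split, toBlocks₁₁] using congrFun (congrFun h i) j

lemma HasInvertibleBlowUp.of_succ [Infinite K] {e : ℕ} (he : 0 < e) (hιe : Fintype.card ι ≤ e)
    (h : HasInvertibleBlowUp x (e + 1)) : HasInvertibleBlowUp x e := by
  cases isEmpty_or_nonempty ι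
  · exact ⟨0, isUnit_of_subsingleton _⟩
  have : NeZero e := ⟨he.ne'⟩
  obtain ⟨T, hT⟩ := h
  obtain ⟨r, c, hlt⟩ := exists_finrank_ker_blowUp_succAbove_lt hT
  obtain ⟨s, ⟨T', hT'⟩, hs⟩ := exists_isGreatest_rank_blowUp (Fin e) x
  have hle : (blowUp x fun l => (T l).submatrix r.succAbove c.succAbove).rank ≤ _ := hs ⟨_, rfl⟩
  have hrank := rank_add_finrank_ker_mulVecLin
    (blowUp x fun l => (T l).submatrix r.succAbove c.succAbove)
  have hs' := hT'.symm.trans_le (rank_blowUp_le x T')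
  rw [Fintype.card_prod] at hrank
  rw [Fintype.card_fin] at hle hrank hs'
  have hsι : s = Fintype.card ι := by
    refine (Nat.le_of_mul_le_mul_left hs' he).antisymm (Nat.le_of_pred_lt ?_)
    refine Nat.lt_of_mul_lt_mul_left (a := e) ?_
    have hpos := Nat.le_mul_of_pos_right e (Fintype.card_pos (α := ι))
    rw [Nat.pred_eq_sub_one, Nat.mul_sub, mul_one]
    omega
  refine ⟨T', isUnit_of_rank_eq_card (hT'.trans ?_)⟩
  rw [Fintype.card_prod, hsι]

theorem NoShrunkSubspace.hasInvertibleBlowUp [Infinite K] (hx : NoShrunkSubspace x) {d : ℕ}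
    (hd : 0 < d) (hιd : Fintype.card ι ≤ d) : HasInvertibleBlowUp x d := by
  obtain ⟨D, T, hD, hT⟩ := exists_rank_blowUp_eq_of_noShrunkSubspace hx
  have hDT : HasInvertibleBlowUp x D := ⟨T, isUnit_of_rank_eq_card (by simpa using hT)⟩
  exact Nat.decreasingInduction' (P := HasInvertibleBlowUp x) (fun k _ hk h => h.of_succ
    (by omega) (by omega)) (Nat.le_mul_of_pos_right d hD) (hDT.mul d)

end InvertibleBlowUp

section Idempotent

variable {K : Type*} [Field K]

lemma det_smul_add_smul_of_isIdempotentElem {V : Type*} [AddCommGroup V] [Module K V]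
    [FiniteDimensional K V] {f : Module.End K V} (hf : IsIdempotentElem f) (a b : K) :
    LinearMap.det (a • f + b • (1 - f)) =
      a ^ Module.finrank K (LinearMap.range f) * b ^ Module.finrank K (LinearMap.ker f) := by
  have hproj := LinearMap.IsIdempotentElem.isProj_range f hf
  let e := (LinearMap.range f).prodEquivOfIsCompl _ hproj.isCompl
  have h : a • f + b • (1 - f) = e.toLinearMap ∘ₗ
      LinearMap.prodMap (a • LinearMap.id) (b • LinearMap.id) ∘ₗ e.symm.toLinearMap := by
    rw [← LinearMap.comp_assoc, LinearEquiv.eq_comp_toLinearMap_symm]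
    ext z
    · simp [e, hproj.map_id z z.2]
    · simp [e]
  rw [h, LinearMap.det_conj, LinearMap.det_prodMap, LinearMap.det_smul, LinearMap.det_smul]
  simp

variable {ι : Type*} [Fintype ι]

lemma exists_isIdempotentElem_range_mulVecLin_eq (U : Submodule K (ι → K)) :
    ∃ p : Matrix ι ι K, IsIdempotentElem p ∧ LinearMap.range p.mulVecLin = U := by
  classical
  obtain ⟨V, hUV⟩ := U.exists_isCompl
  refine ⟨LinearMap.toMatrixAlgEquiv' (U.projection V hUV),
    (Submodule.isIdempotentElem_projection hUV).map _, ?_⟩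
  exact (congrArg LinearMap.range (toLinAlgEquiv'_toMatrixAlgEquiv' _)).trans
    (Submodule.range_projection hUV)

lemma mul_eq_self_of_range_le {p q : Matrix ι ι K} (hq : IsIdempotentElem q)
    (h : LinearMap.range p.mulVecLin ≤ LinearMap.range q.mulVecLin) : q * p = p := by
  classical
  refine toLin'.injective (LinearMap.ext fun z => ?_)
  obtain ⟨y, hy⟩ := h ⟨z, rfl⟩
  simp only [toLin'_apply, mulVecLin_apply] at hy ⊢
  rw [← mulVec_mulVec, ← hy, mulVec_mulVec, hq.eq]

lemma det_smul_add_smul_one_sub [DecidableEq ι] {q : Matrix ι ι K} (hq : IsIdempotentElem q)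
    (a b : K) :
    (a • q + b • (1 - q)).det = a ^ q.rank * b ^ (Fintype.card ι - q.rank) := by
  rw [← rank_add_finrank_ker_mulVecLin q, Nat.add_sub_cancel_left, ← LinearMap.det_toLin',
    show toLin' (a • q + b • (1 - q)) = a • toLin' q + b • (1 - toLin' q) by simp; rfl]
  exact det_smul_add_smul_of_isIdempotentElem (hq.map toLinAlgEquiv') a b

end Idempotent

section SLInvariant

variable {σ ι K : Type*} [Fintype ι] [DecidableEq ι] [Field K]

/-- A function on tuples of square matrices which is invariant under the left-right action of
`SL × SL` and polynomial along every polynomial curve. -/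
structure IsSLInvariant (F : (σ → Matrix ι ι K) → K) : Prop where
  map_mul_mul {A B : Matrix ι ι K} (hA : A.det = 1) (hB : B.det = 1) (x : σ → Matrix ι ι K) :
    F (fun l => A * x l * B) = F x
  exists_eval_eq (X : σ → Matrix ι ι (Polynomial K)) :
    ∃ q : Polynomial K, ∀ s, F (fun l => (X l).map (Polynomial.eval s)) = q.eval s

lemma isSLInvariant_det (l : σ) : IsSLInvariant fun x : σ → Matrix ι ι K => (x l).det where
  map_mul_mul hA hB x := by rw [det_mul, det_mul, hA, hB, one_mul, mul_one]
  exists_eval_eq X := ⟨(X l).det, fun s => ((Polynomial.evalRingHom s).map_det (X l)).symm⟩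

variable {F : (σ → Matrix ι ι K) → K} (hF : IsSLInvariant F)
include hF

lemma IsSLInvariant.map_mul_mul_of_det_mul_det [IsAlgClosed K] {A B : Matrix ι ι K}
    (hAB : A.det * B.det = 1) (x : σ → Matrix ι ι K) : F (fun l => A * x l * B) = F x := by
  cases isEmpty_or_nonempty ι
  · exact congrArg F (Subsingleton.elim _ _)
  obtain ⟨t, ht⟩ := IsAlgClosed.exists_pow_nat_eq A.det (Fintype.card_pos (α := ι))
  have hA0 : A.det ≠ 0 := left_ne_zero_of_mul_eq_one hAB
  have ht0 : t ≠ 0 := by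
    rintro rfl
    exact hA0 (by rw [← ht, zero_pow Fintype.card_ne_zero])
  have hA : (t⁻¹ • A).det = 1 := by rw [det_smul, inv_pow, ht, inv_mul_cancel₀ hA0]
  have hB : (t • B).det = 1 := by rw [det_smul, ht, hAB]
  simpa [ht0] using hF.map_mul_mul hA hB x

lemma IsSLInvariant.map_eval_zero_of_forall_ne_zero [IsAlgClosed K]
    (X : σ → Matrix ι ι (Polynomial K)) (A B : K → Matrix ι ι K) (x : σ → Matrix ι ι K)
    (h : ∀ s ≠ 0, (A s).det * (B s).det = 1 ∧
      ∀ l, (X l).map (Polynomial.eval s) = A s * x l * B s) :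
    F (fun l => (X l).map (Polynomial.eval 0)) = F x := by
  obtain ⟨q, hq⟩ := hF.exists_eval_eq X
  have hqx : ∀ s ∈ ({0}ᶜ : Set K), q.eval s = (Polynomial.C (F x)).eval s := by
    intro s hs
    obtain ⟨hdet, hs⟩ := h s hs
    rw [← hq, funext hs, hF.map_mul_mul_of_det_mul_det hdet, Polynomial.eval_C]
  rw [hq, Polynomial.eq_of_infinite_eval_eq q _
    ((Set.finite_singleton (0 : K)).infinite_compl.mono hqx), Polynomial.eval_C]

lemma IsSLInvariant.map_eval_zero_of_idempotent [IsAlgClosed K] {p q : Matrix ι ι K}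
    (hp : IsIdempotentElem p) (hq : IsIdempotentElem q) {x : σ → Matrix ι ι K}
    (hx : ∀ l, q * x l * p = x l * p) (f g : Polynomial K) (a b c d : K → K)
    (hac : ∀ s ≠ 0, a s * c s = f.eval s) (hbd : ∀ s ≠ 0, b s * d s = f.eval s)
    (had : ∀ s ≠ 0, a s * d s = g.eval s)
    (hdet : ∀ s ≠ 0, a s ^ q.rank * b s ^ (Fintype.card ι - q.rank) *
      (c s ^ p.rank * d s ^ (Fintype.card ι - p.rank)) = 1) :
    F (fun l => f.eval 0 • (q * x l * p + (1 - q) * x l * (1 - p)) +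
      g.eval 0 • (q * x l * (1 - p))) = F x := by
  have heval (s : K) (M N : Matrix ι ι K) :
      (f • M.map Polynomial.C + g • N.map Polynomial.C).map (Polynomial.eval s) =
        f.eval s • M + g.eval s • N := by
    ext
    simp
  simp only [← heval]
  refine hF.map_eval_zero_of_forall_ne_zero _ (fun s => a s • q + b s • (1 - q))
    (fun s => c s • p + d s • (1 - p)) x fun s hs => ⟨?_, fun l => ?_⟩
  · rw [det_smul_add_smul_one_sub hq, det_smul_add_smul_one_sub hp, hdet s hs]
  · have hx' : (1 - q) * x l * p = 0 := by rw [sub_mul, sub_mul, one_mul, hx, sub_self]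
    rw [heval, add_mul, add_mul, mul_add, mul_add]
    simp only [smul_mul_assoc, mul_smul_comm, smul_smul, hx', smul_zero, zero_add, smul_add,
      mul_comm (c s), mul_comm (d s), hac s hs, hbd s hs, had s hs]
    abel

lemma IsSLInvariant.map_diag_of_idempotent [IsAlgClosed K] {p q : Matrix ι ι K}
    (hp : IsIdempotentElem p) (hq : IsIdempotentElem q) (hpq : p.rank = q.rank)
    {x : σ → Matrix ι ι K} (hx : ∀ l, q * x l * p = x l * p) :
    F (fun l => q * x l * p + (1 - q) * x l * (1 - p)) = F x := by
  have h := hF.map_eval_zero_of_idempotent hp hq hx 1 Polynomial.X id 1 (·⁻¹) 1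
    (fun s hs => by simp [hs]) (fun s _ => by simp) (fun s _ => by simp)
    fun s hs => by simp [hpq, hs]
  simpa using h

lemma IsSLInvariant.eq_map_zero_of_rank_lt [IsAlgClosed K] {p q : Matrix ι ι K}
    (hp : IsIdempotentElem p) (hq : IsIdempotentElem q) (hqp : q.rank < p.rank)
    {x : σ → Matrix ι ι K} (hx : ∀ l, q * x l * p = x l * p) : F x = F 0 := by
  have hpι := rank_le_card_width p
  have h := hF.map_eval_zero_of_idempotent hp hq hx (Polynomial.X ^ (p.rank - q.rank))
    (Polynomial.X ^ (Fintype.card ι - q.rank + p.rank)) (· ^ (Fintype.card ι - q.rank))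
    (fun s => (s ^ q.rank)⁻¹) (fun s => (s ^ (Fintype.card ι - p.rank))⁻¹) (· ^ p.rank)
    (fun s hs => ?_) (fun s hs => ?_) (fun s _ => by simp [pow_add]) fun s hs => ?_
  · rw [← h]
    congr 1
    ext1 l
    simp [show p.rank - q.rank ≠ 0 by omega, show p.rank ≠ 0 by omega]
  · field_simp
    simp only [Polynomial.eval_pow, Polynomial.eval_X, ← pow_add]
    congr 1
    omega
  · field_simp
    simp only [Polynomial.eval_pow, Polynomial.eval_X, ← pow_add]
    congr 1
    omega
  · simp only [inv_pow, ← pow_mul, mul_comm q.rank, mul_comm p.rank]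
    rw [mul_inv_cancel₀ (pow_ne_zero _ hs), inv_mul_cancel₀ (pow_ne_zero _ hs), one_mul]

lemma IsSLInvariant.eq_map_zero_of_not_noShrunkSubspace [IsAlgClosed K] {x : σ → Matrix ι ι K}
    (hx : ¬ NoShrunkSubspace x) : F x = F 0 := by
  obtain ⟨U, hU⟩ := not_forall.1 hx
  obtain ⟨p, hp, rfl⟩ := exists_isIdempotentElem_range_mulVecLin_eq U
  obtain ⟨q, hq, hqU⟩ := exists_isIdempotentElem_range_mulVecLin_eq
    (⨆ l, (LinearMap.range p.mulVecLin).map (x l).mulVecLin)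
  rw [← hqU, not_le] at hU
  refine hF.eq_map_zero_of_rank_lt hp hq hU fun l => ?_
  rw [mul_assoc]
  refine mul_eq_self_of_range_le hq ?_
  rw [hqU, mulVecLin_mul, LinearMap.range_comp]
  exact le_iSup (fun l => (LinearMap.range p.mulVecLin).map (x l).mulVecLin) l

end SLInvariant

section BrauerNesbitt

variable {K 𝒜 V W : Type*} [Ring 𝒜] [AddCommGroup V] [Module 𝒜 V] [AddCommGroup W] [Module 𝒜 W]

lemma isSemisimpleModule_prod [IsSemisimpleModule 𝒜 V] [IsSemisimpleModule 𝒜 W] :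
    IsSemisimpleModule 𝒜 (V × W) := by
  have h := IsSemisimpleModule.sup (.range (LinearMap.inl 𝒜 V W)) (.range (LinearMap.inr 𝒜 V W))
  rw [LinearMap.sup_range_inl_inr] at h
  exact .congr Submodule.topEquiv.symm

lemma exists_linearEquiv_ker_prod_range [IsSemisimpleModule 𝒜 V] [IsSemisimpleModule 𝒜 W]
    (f : V →ₗ[𝒜] W) : ∃ C : Submodule 𝒜 W,
      Nonempty (V ≃ₗ[𝒜] LinearMap.ker f × LinearMap.range f) ∧
      Nonempty (W ≃ₗ[𝒜] C × LinearMap.range f) := by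
  obtain ⟨N, hN⟩ := exists_isCompl (LinearMap.ker f)
  obtain ⟨C, hC⟩ := exists_isCompl (LinearMap.range f)
  exact ⟨C, ⟨(Submodule.prodEquivOfIsCompl _ _ hN).symm ≪≫ₗ (LinearEquiv.refl 𝒜 _).prodCongr
    ((Submodule.quotientEquivOfIsCompl _ N hN).symm ≪≫ₗ f.quotKerEquivRange)⟩,
    ⟨(Submodule.prodEquivOfIsCompl _ _ hC.symm).symm⟩⟩

lemma hom_eq_zero_of_forall_hom_eq_zero [IsSemisimpleModule 𝒜 V] [IsSemisimpleModule 𝒜 W]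
    (h : ∀ f : V →ₗ[𝒜] W, f = 0) (g : W →ₗ[𝒜] V) : g = 0 := by
  obtain ⟨C, ⟨eW⟩, ⟨eV⟩⟩ := exists_linearEquiv_ker_prod_range g
  have h₀ := h (eW.symm.toLinearMap ∘ₗ LinearMap.inr 𝒜 _ _ ∘ₗ LinearMap.snd 𝒜 _ _ ∘ₗ eV.toLinearMap)
  refine LinearMap.range_eq_bot.mp ((Submodule.eq_bot_iff _).mpr fun z hz => ?_)
  simpa using LinearMap.congr_fun h₀ (eV.symm (0, ⟨z, hz⟩))

lemma exists_smul_eq_self_and_smul_eq_zero [IsSemisimpleModule 𝒜 (V × W)]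
    [Module.Finite (Module.End 𝒜 (V × W)) (V × W)]
    (hVW : ∀ f : V →ₗ[𝒜] W, f = 0) (hWV : ∀ f : W →ₗ[𝒜] V, f = 0) :
    ∃ a : 𝒜, (∀ v : V, a • v = v) ∧ ∀ w : W, a • w = 0 := by
  -- The projection onto `V` is linear over the endomorphism ring, so density applies to it.
  let p : Module.End (Module.End 𝒜 (V × W)) (V × W) :=
    { toFun z := (z.1, 0)
      map_add' := by simp
      map_smul' f z := by
        have h₁ : (f (z.1, 0)).2 = 0 :=
          LinearMap.congr_fun (hVW (LinearMap.snd 𝒜 V W ∘ₗ f ∘ₗ LinearMap.inl 𝒜 V W)) z.1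
        have h₂ : (f (0, z.2)).1 = 0 :=
          LinearMap.congr_fun (hWV (LinearMap.fst 𝒜 V W ∘ₗ f ∘ₗ LinearMap.inr 𝒜 V W)) z.2
        have h : f z = f (z.1, 0) + f (0, z.2) := by simp [← map_add]
        ext <;> simp [h, h₁, h₂] }
  obtain ⟨a, ha⟩ := Module.Finite.toModuleEnd_moduleEnd_surjective p
  exact ⟨a, fun v => congrArg Prod.fst (LinearMap.congr_fun ha (v, 0)),
    fun w => congrArg Prod.snd (LinearMap.congr_fun ha (0, w))⟩

variable [Field K] [Algebra K 𝒜] [Module K V] [IsScalarTower K 𝒜 V] [Module K W]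
  [IsScalarTower K 𝒜 W]

variable (K) in
lemma finiteDimensional_of_isScalarTower [FiniteDimensional K V] (N : Submodule 𝒜 V) :
    FiniteDimensional K N :=
  .of_injective (N.subtype.restrictScalars K) N.injective_subtype

lemma finrank_lt_of_linearEquiv_prod [FiniteDimensional K V] [FiniteDimensional K W] [Nontrivial W]
    {U : Type*} [AddCommGroup U] [Module K U] [Module 𝒜 U] [IsScalarTower K 𝒜 U]
    (e : U ≃ₗ[𝒜] V × W) : Module.finrank K V < Module.finrank K U := by
  rw [(e.restrictScalars K).finrank_eq, Module.finrank_prod]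
  exact Nat.lt_add_of_pos_right Module.finrank_pos

variable [FiniteDimensional K V] [FiniteDimensional K W]

lemma charpoly_lsmul_prod (a : 𝒜) : (Algebra.lsmul K K (V × W) a).charpoly =
    (Algebra.lsmul K K V a).charpoly * (Algebra.lsmul K K W a).charpoly := by
  rw [← LinearMap.charpoly_prodMap]
  rfl

lemma charpoly_lsmul_congr (e : V ≃ₗ[𝒜] W) (a : 𝒜) :
    (Algebra.lsmul K K V a).charpoly = (Algebra.lsmul K K W a).charpoly := by
  rw [← LinearEquiv.charpoly_conj (e.restrictScalars K)]
  congr 1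
  ext w
  simp [LinearEquiv.conj_apply]

lemma subsingleton_of_charpoly_lsmul_eq [IsSemisimpleModule 𝒜 V] [IsSemisimpleModule 𝒜 W]
    (h : ∀ a : 𝒜, (Algebra.lsmul K K V a).charpoly = (Algebra.lsmul K K W a).charpoly)
    (hVW : ∀ f : V →ₗ[𝒜] W, f = 0) : Subsingleton V ∧ Subsingleton W := by
  have := isSemisimpleModule_prod (𝒜 := 𝒜) (V := V) (W := W)
  have := IsScalarTower.to_smulCommClass (R := K) (A := 𝒜) (M := V × W)
  have := Module.Finite.of_restrictScalars_finite K (Module.End 𝒜 (V × W)) (V × W)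
  obtain ⟨a, haV, haW⟩ :=
    exists_smul_eq_self_and_smul_eq_zero hVW (hom_eq_zero_of_forall_hom_eq_zero hVW)
  have heq := h a
  rw [show Algebra.lsmul K K V a = 1 from LinearMap.ext haV,
    show Algebra.lsmul K K W a = 0 from LinearMap.ext haW,
    LinearMap.charpoly_one, LinearMap.charpoly_zero] at heq
  have hV : Module.finrank K V = 0 := by
    by_contra h₀
    simpa [h₀] using congrArg (Polynomial.eval 1) heq
  have hW : Module.finrank K W = 0 := by simpa [hV] using congrArg Polynomial.natDegree heq.symm
  exact ⟨Module.finrank_zero_iff.mp hV, Module.finrank_zero_iff.mp hW⟩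

lemma charpoly_lsmul_eq_of_prod {V₁ W₁ U : Type*} [AddCommGroup V₁] [Module 𝒜 V₁] [Module K V₁]
    [IsScalarTower K 𝒜 V₁] [FiniteDimensional K V₁] [AddCommGroup W₁] [Module 𝒜 W₁] [Module K W₁]
    [IsScalarTower K 𝒜 W₁] [FiniteDimensional K W₁] [AddCommGroup U] [Module 𝒜 U] [Module K U]
    [IsScalarTower K 𝒜 U] [FiniteDimensional K U] (eV : V ≃ₗ[𝒜] V₁ × U) (eW : W ≃ₗ[𝒜] W₁ × U)
    {a : 𝒜} (h : (Algebra.lsmul K K V a).charpoly = (Algebra.lsmul K K W a).charpoly) :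
    (Algebra.lsmul K K V₁ a).charpoly = (Algebra.lsmul K K W₁ a).charpoly := by
  rw [charpoly_lsmul_congr eV, charpoly_lsmul_congr eW, charpoly_lsmul_prod,
    charpoly_lsmul_prod] at h
  exact mul_right_cancel₀ (LinearMap.charpoly_monic _).ne_zero h

/-- The **Brauer–Nesbitt theorem**. -/
theorem nonempty_linearEquiv_of_charpoly_lsmul_eq [IsSemisimpleModule 𝒜 V] [IsSemisimpleModule 𝒜 W]
    (h : ∀ a : 𝒜, (Algebra.lsmul K K V a).charpoly = (Algebra.lsmul K K W a).charpoly) :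
    Nonempty (V ≃ₗ[𝒜] W) := by
  induction hd : Module.finrank K V using Nat.strong_induction_on generalizing V W with
  | _ d ih =>
  subst hd
  by_cases hVW : ∀ f : V →ₗ[𝒜] W, f = 0
  · obtain ⟨_, _⟩ := subsingleton_of_charpoly_lsmul_eq h hVW
    exact ⟨0⟩
  push Not at hVW
  obtain ⟨f, hf⟩ := hVW
  obtain ⟨C, ⟨eV⟩, ⟨eW⟩⟩ := exists_linearEquiv_ker_prod_range f
  have := finiteDimensional_of_isScalarTower K (LinearMap.ker f)
  have := finiteDimensional_of_isScalarTower K C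
  have := finiteDimensional_of_isScalarTower K (LinearMap.range f)
  have := Submodule.nontrivial_iff_ne_bot.mpr (mt LinearMap.range_eq_bot.mp hf)
  obtain ⟨e⟩ := ih _ (finrank_lt_of_linearEquiv_prod eV)
    (fun a => charpoly_lsmul_eq_of_prod eV eW (h a)) rfl
  exact ⟨eV ≪≫ₗ e.prodCongr (.refl 𝒜 _) ≪≫ₗ eW.symm⟩

end BrauerNesbitt

section CornerSum

variable {R : Type*} [Ring R]

/-- The sum of the two diagonal corners `q a p` and `(1 - q) a (1 - p)` of the Peirce decomposition
of `a` with respect to `q` on the left and `p` on the right. -/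
def cornerSum (q p a : R) : R := q * a * p + (1 - q) * a * (1 - p)

lemma cornerSum_add (q p a b : R) : cornerSum q p (a + b) = cornerSum q p a + cornerSum q p b := by
  simp only [cornerSum, mul_add, add_mul]
  abel

lemma cornerSum_one {p : R} (hp : IsIdempotentElem p) : cornerSum p p 1 = 1 := by
  rw [cornerSum, mul_one, mul_one, hp.eq, hp.one_sub.eq, add_sub_cancel]

lemma cornerSum_eq {q p a : R} (ha : q * a * p = a * p) :
    cornerSum q p a = a * p + (1 - q) * a := by
  rw [cornerSum, ha, mul_sub, mul_one, sub_mul, sub_mul, one_mul, ha, sub_self, sub_zero]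

lemma cornerSum_mul_cornerSum {q p r a b : R} (hp : IsIdempotentElem p) (ha : q * a * p = a * p)
    (hb : p * b * r = b * r) :
    cornerSum q p a * cornerSum p r b = cornerSum q r (a * b) := by
  have hab : a * p * (b * r) = a * b * r := by rw [mul_assoc, ← mul_assoc p, hb, mul_assoc]
  have hqab : q * (a * b) * r = a * b * r := by
    rw [← hab, ← ha, mul_assoc q, mul_assoc q, mul_assoc q, hab]
  have hap : (1 - q) * a * p = 0 := by rw [sub_mul, sub_mul, one_mul, ha, sub_self]
  have hqabr : (1 - q) * a * (b * r) = 0 := by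
    rw [← hb, ← mul_assoc, ← mul_assoc, hap, zero_mul, zero_mul]
  rw [cornerSum_eq ha, cornerSum_eq hb, cornerSum_eq hqab, add_mul, mul_add, mul_add, hab, hqabr,
    zero_add, ← mul_assoc (a * p), mul_assoc a p, hp.mul_one_sub_self, mul_zero, zero_mul, add_zero,
    ← mul_assoc ((1 - q) * a), mul_sub, hap, mul_one, sub_zero, mul_assoc (1 - q)]

end CornerSum

section KroneckerOne

variable {δ ι K : Type*} [DecidableEq δ] [Field K]

lemma one_kronecker_eq_comp_diagonal (M : Matrix ι ι K) :
    (1 : Matrix δ δ K) ⊗ₖ M = comp δ δ ι ι K (diagonal fun _ => M) := by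
  ext ⟨d, i⟩ ⟨e, j⟩
  by_cases hde : d = e <;> simp [comp_apply, one_apply, diagonal, hde]

lemma one_sub_one_kronecker [DecidableEq ι] (M : Matrix ι ι K) :
    1 - (1 : Matrix δ δ K) ⊗ₖ M = 1 ⊗ₖ (1 - M) := by
  rw [sub_eq_iff_eq_add, ← kronecker_add, sub_add_cancel, one_kronecker_one]

variable [Fintype δ] [Fintype ι]

lemma isIdempotentElem_one_kronecker {p : Matrix ι ι K} (hp : IsIdempotentElem p) :
    IsIdempotentElem ((1 : Matrix δ δ K) ⊗ₖ p) := by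
  rw [IsIdempotentElem, ← mul_kronecker_mul, one_mul, hp.eq]

lemma one_kronecker_mul_comp_mul (A B : Matrix ι ι K) (M : Matrix δ δ (Matrix ι ι K)) :
    (1 : Matrix δ δ K) ⊗ₖ A * comp δ δ ι ι K M * (1 : Matrix δ δ K) ⊗ₖ B =
      comp δ δ ι ι K (M.map fun N => A * N * B) := by
  simp only [one_kronecker_eq_comp_diagonal, ← compRingEquiv_apply, ← map_mul]
  refine congrArg _ ?_
  ext1 d e
  simp

lemma one_kronecker_mul_blowUp_mul {σ : Type*} [Fintype σ] (A B : Matrix ι ι K)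
    (x : σ → Matrix ι ι K) (T : σ → Matrix δ δ K) :
    (1 : Matrix δ δ K) ⊗ₖ A * blowUp x T * (1 : Matrix δ δ K) ⊗ₖ B =
      blowUp (fun l => A * x l * B) T := by
  simp [blowUp, Finset.mul_sum, Finset.sum_mul, ← mul_kronecker_mul]

lemma one_kronecker_mul_blowUp_eq_blowUp_mul_one_kronecker {σ : Type*} [Fintype σ]
    {A B : Matrix ι ι K} {x z : σ → Matrix ι ι K} {T : σ → Matrix δ δ K}
    (h : ∀ l, A * x l = z l * B) : 1 ⊗ₖ A * blowUp x T = blowUp z T * 1 ⊗ₖ B := by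
  classical
  have h1 := one_kronecker_mul_blowUp_mul A 1 x T
  have h2 := one_kronecker_mul_blowUp_mul 1 B z T
  rw [one_kronecker_one, mul_one] at h1
  rw [one_kronecker_one, one_mul] at h2
  simp only [h1, h2, mul_one, one_mul, h]

lemma comp_symm_one_kronecker_mul (A : Matrix ι ι K) (M : Matrix (δ × ι) (δ × ι) K) (d e : δ) :
    (comp δ δ ι ι K).symm (1 ⊗ₖ A * M) d e = A * (comp δ δ ι ι K).symm M d e := by
  classical
  obtain ⟨N, rfl⟩ := (comp δ δ ι ι K).surjective M
  have h := one_kronecker_mul_comp_mul A 1 N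
  rw [one_kronecker_one, mul_one] at h
  rw [h, Equiv.symm_apply_apply, Equiv.symm_apply_apply, map_apply, mul_one]

lemma comp_symm_mul_one_kronecker (A : Matrix ι ι K) (M : Matrix (δ × ι) (δ × ι) K) (d e : δ) :
    (comp δ δ ι ι K).symm (M * 1 ⊗ₖ A) d e = (comp δ δ ι ι K).symm M d e * A := by
  classical
  obtain ⟨N, rfl⟩ := (comp δ δ ι ι K).surjective M
  have h := one_kronecker_mul_comp_mul 1 A N
  rw [one_kronecker_one, one_mul] at h
  rw [h, Equiv.symm_apply_apply, Equiv.symm_apply_apply, map_apply, one_mul]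

variable [DecidableEq ι]

lemma cornerSum_one_kronecker_one_kronecker (q p M : Matrix ι ι K) :
    cornerSum ((1 : Matrix δ δ K) ⊗ₖ q) (1 ⊗ₖ p) (1 ⊗ₖ M) = 1 ⊗ₖ cornerSum q p M := by
  simp only [cornerSum, one_sub_one_kronecker, ← mul_kronecker_mul, one_mul, ← kronecker_add]

lemma cornerSum_one_kronecker_comp (q p : Matrix ι ι K) (M : Matrix δ δ (Matrix ι ι K)) :
    cornerSum ((1 : Matrix δ δ K) ⊗ₖ q) (1 ⊗ₖ p) (comp δ δ ι ι K M) =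
      comp δ δ ι ι K (M.map (cornerSum q p)) := by
  simp only [cornerSum, one_sub_one_kronecker, one_kronecker_mul_comp_mul]
  rfl

lemma cornerSum_one_kronecker_blowUp {σ : Type*} [Fintype σ] (q p : Matrix ι ι K)
    (x : σ → Matrix ι ι K) (T : σ → Matrix δ δ K) :
    cornerSum ((1 : Matrix δ δ K) ⊗ₖ q) (1 ⊗ₖ p) (blowUp x T) =
      blowUp (fun l => cornerSum q p (x l)) T := by
  simp only [cornerSum, one_sub_one_kronecker, one_kronecker_mul_blowUp_mul]
  ext
  simp [blowUp_apply, mul_add, Finset.sum_add_distrib]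

lemma one_kronecker_mul_adjugate_blowUp_mul {σ : Type*} [Fintype σ] {A B : Matrix ι ι K}
    (hA : A.det = 1) (hB : B.det = 1) (x : σ → Matrix ι ι K) (T : σ → Matrix δ δ K) :
    1 ⊗ₖ B * (blowUp (fun l => A * x l * B) T).adjugate * 1 ⊗ₖ A = (blowUp x T).adjugate := by
  have hdet {M : Matrix ι ι K} (hM : M.det = 1) : ((1 : Matrix δ δ K) ⊗ₖ M).det = 1 := by
    rw [det_kronecker, hM, det_one, one_pow, one_pow, one_mul]
  rw [← one_kronecker_mul_blowUp_mul, adjugate_mul_distrib, adjugate_mul_distrib, ← mul_assoc,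
    mul_adjugate, mul_assoc, mul_assoc, adjugate_mul, hdet hA, hdet hB, one_smul, one_mul, mul_one]

end KroneckerOne

section SLInvariant

variable {σ ι K : Type*} [Fintype ι] [DecidableEq ι] [Field K]

lemma isSLInvariant_det_blowUp {δ : Type*} [Fintype δ] [DecidableEq δ] [Fintype σ]
    (T : σ → Matrix δ δ K) : IsSLInvariant fun x : σ → Matrix ι ι K => (blowUp x T).det where
  map_mul_mul hA hB x := by
    simp [← one_kronecker_mul_blowUp_mul, det_mul, det_kronecker, hA, hB]
  exists_eval_eq X := by
    refine ⟨(blowUp X fun l => (T l).map Polynomial.C).det, fun s => ?_⟩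
    rw [← Polynomial.coe_evalRingHom, RingHom.map_det, RingHom.mapMatrix_apply, blowUp_map]
    simp [Matrix.map_map, Function.comp_def]

lemma IsSLInvariant.comp_mul_mul {F : (σ → Matrix ι ι K) → K} (hF : IsSLInvariant F)
    (A B : (Matrix ι ι K)ˣ) : IsSLInvariant fun x : σ → Matrix ι ι K => F fun l => A * x l * B where
  map_mul_mul {C D} hC hD x := by
    have hAC : (A * C * A.1⁻¹).det = 1 := by
      rw [← coe_units_inv, det_units_conj, hC]
    have hBD : (B.1⁻¹ * D * B).det = 1 := by
      rw [← coe_units_inv, det_units_conj', hD]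
    simpa [mul_assoc] using hF.map_mul_mul hAC hBD fun l => A * x l * B
  exists_eval_eq X := by
    obtain ⟨q, hq⟩ := hF.exists_eval_eq fun l => A.1.map Polynomial.C * X l * B.1.map Polynomial.C
    refine ⟨q, fun s => ?_⟩
    have hC (M : Matrix ι ι K) : (M.map Polynomial.C).map (Polynomial.eval s) = M := by
      ext
      simp
    simp only [← hq, ← Polynomial.coe_evalRingHom, Matrix.map_mul]
    simp only [Polynomial.coe_evalRingHom, hC]

end SLInvariant

lemma one_kronecker_mulVec_slotSingle {δ ι K : Type*} [Fintype δ] [DecidableEq δ] [Fintype ι]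
    [Field K] (M : Matrix ι ι K) (d : δ) (u : ι → K) :
    ((1 : Matrix δ δ K) ⊗ₖ M) *ᵥ slotSingle d u = slotSingle d (M *ᵥ u) := by
  ext ⟨e, i⟩
  simp [mulVec, dotProduct, Fintype.sum_prod_type, slotSingle_apply, one_apply]

section Compatible

variable {σ δ ι K 𝒜 : Type*} [Fintype σ] [Fintype δ] [Fintype ι] [DecidableEq ι] [Field K]
  [Ring 𝒜] [Algebra K 𝒜]

/-- The tuple `x` is compatible with the representation `ρ` of `𝒜` if its blow-up at `T` is
invertible with all the matrices `(blowUp x T)⁻¹ * (1 ⊗ₖ x l)` having, as `δ × δ` block matrices,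
blocks in the image of `ρ`, namely the images of the entries of `y l`. -/
structure IsCompatible [DecidableEq δ] (T : σ → Matrix δ δ K) (y : σ → Matrix δ δ 𝒜)
    (x : σ → Matrix ι ι K) (ρ : 𝒜 →ₐ[K] Matrix ι ι K) : Prop where
  isUnit_blowUp : IsUnit (blowUp x T)
  blowUp_mul (l : σ) : blowUp x T * comp δ δ ι ι K ((y l).map ρ) = 1 ⊗ₖ x l

lemma isCompatible_of_eq_inv_mul [DecidableEq δ] {T : σ → Matrix δ δ K} {y : σ → Matrix δ δ 𝒜}
    {x : σ → Matrix ι ι K} {ρ : 𝒜 →ₐ[K] Matrix ι ι K} (hx : IsUnit (blowUp x T).det)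
    (hρ : ∀ l, (y l).map ρ = (comp δ δ ι ι K).symm ((blowUp x T)⁻¹ * 1 ⊗ₖ x l)) :
    IsCompatible T y x ρ where
  isUnit_blowUp := (isUnit_iff_isUnit_det _).2 hx
  blowUp_mul l := by
    rw [hρ, Equiv.apply_symm_apply, mul_nonsing_inv_cancel_left _ _ hx]

lemma comp_map_mulVec_slotSingle [DecidableEq δ] (ρ : 𝒜 →ₐ[K] Matrix ι ι K) (y : Matrix δ δ 𝒜)
    (d e : δ) (u : ι → K) :
    (fun i => (comp δ δ ι ι K (y.map ρ) *ᵥ slotSingle d u) (e, i)) = ρ (y e d) *ᵥ u := by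
  ext i
  simp [mulVec, dotProduct, Fintype.sum_prod_type, slotSingle_apply, comp_apply]

variable [DecidableEq δ] {T : σ → Matrix δ δ K} {y : σ → Matrix δ δ 𝒜} {x : σ → Matrix ι ι K}
  {ρ : 𝒜 →ₐ[K] Matrix ι ι K}

lemma IsCompatible.map_slotwise_eq (h : IsCompatible T y x ρ) {U : Submodule K (ι → K)}
    (hU : ∀ a, U.map (ρ a).mulVecLin ≤ U) :
    (slotwise δ U).map (blowUp x T).mulVecLin = slotwise δ (⨆ l, U.map (x l).mulVecLin) := by
  refine le_antisymm ?_ (slotwise_le fun d => ?_)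
  · rintro _ ⟨z, hz, rfl⟩
    refine mem_slotwise.2 fun d => ?_
    rw [mulVecLin_apply, blowUp_mulVec]
    refine Submodule.sum_mem _ fun l _ => Submodule.sum_mem _ fun e _ => Submodule.smul_mem _ _ ?_
    exact Submodule.mem_iSup_of_mem l ⟨_, mem_slotwise.1 hz e, rfl⟩
  · rw [Submodule.map_iSup, iSup_le_iff]
    rintro l _ ⟨_, ⟨u, hu, rfl⟩, rfl⟩
    refine ⟨comp δ δ ι ι K ((y l).map ρ) *ᵥ slotSingle d u, mem_slotwise.2 fun e => ?_, ?_⟩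
    · rw [comp_map_mulVec_slotSingle]
      exact hU _ ⟨u, hu, rfl⟩
    · rw [mulVecLin_apply, mulVec_mulVec, h.blowUp_mul, one_kronecker_mulVec_slotSingle,
        mulVecLin_apply]

lemma IsCompatible.finrank_iSup_map_eq [Nonempty δ] (h : IsCompatible T y x ρ)
    {U : Submodule K (ι → K)} (hU : ∀ a, U.map (ρ a).mulVecLin ≤ U) :
    Module.finrank K ↥(⨆ l, U.map (x l).mulVecLin) = Module.finrank K U := by
  have hinj := mulVec_injective_of_isUnit h.isUnit_blowUp
  have hfin := (Submodule.equivMapOfInjective (blowUp x T).mulVecLin hinj (slotwise δ U)).finrank_eq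
  rw [h.map_slotwise_eq hU, finrank_slotwise, finrank_slotwise] at hfin
  exact (Nat.eq_of_mul_eq_mul_left Fintype.card_pos hfin).symm

/-- The representation on `U ⊕ V / U` obtained from a representation `ρ` on `V` for which the range
`U` of the idempotent `p` is stable. -/
def cornerSumHom {p : Matrix ι ι K} (hp : IsIdempotentElem p) (ρ : 𝒜 →ₐ[K] Matrix ι ι K)
    (hρ : ∀ a, p * ρ a * p = ρ a * p) : 𝒜 →ₐ[K] Matrix ι ι K :=
  AlgHom.ofLinearMap
    { toFun a := cornerSum p p (ρ a)
      map_add' a b := by rw [map_add, cornerSum_add]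
      map_smul' c a := by simp [cornerSum] }
    (by simp [cornerSum_one hp])
    fun a b => by simp [cornerSum_mul_cornerSum hp (hρ a) (hρ b)]

lemma cornerSumHom_apply {p : Matrix ι ι K} (hp : IsIdempotentElem p)
    (hρ : ∀ a, p * ρ a * p = ρ a * p) (a : 𝒜) :
    cornerSumHom hp ρ hρ a = cornerSum p p (ρ a) := rfl

lemma det_cornerSumHom [IsAlgClosed K] {p : Matrix ι ι K} (hp : IsIdempotentElem p)
    (hρ : ∀ a, p * ρ a * p = ρ a * p) (a : 𝒜) : (cornerSumHom hp ρ hρ a).det = (ρ a).det :=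
  (isSLInvariant_det a).map_diag_of_idempotent hp hp rfl hρ

lemma IsCompatible.cornerSum [IsAlgClosed K] (h : IsCompatible T y x ρ) {p q : Matrix ι ι K}
    (hp : IsIdempotentElem p) (hq : IsIdempotentElem q) (hpq : p.rank = q.rank)
    (hρ : ∀ a, p * ρ a * p = ρ a * p) (hx : ∀ l, q * x l * p = x l * p) :
    IsCompatible T y (fun l => cornerSum q p (x l)) (cornerSumHom hp ρ hρ) where
  isUnit_blowUp := by
    rw [isUnit_iff_isUnit_det]
    exact ((isSLInvariant_det_blowUp T).map_diag_of_idempotent hp hq hpq hx).symm ▸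
      (isUnit_iff_isUnit_det _).1 h.isUnit_blowUp
  blowUp_mul l := by
    have hQ : (1 : Matrix δ δ K) ⊗ₖ q * blowUp x T * 1 ⊗ₖ p = blowUp x T * 1 ⊗ₖ p := by
      rw [one_kronecker_mul_blowUp_mul, funext hx]
      simpa using (one_kronecker_mul_blowUp_mul 1 p x T).symm
    have hP : (1 : Matrix δ δ K) ⊗ₖ p * comp δ δ ι ι K ((y l).map ρ) * 1 ⊗ₖ p =
        comp δ δ ι ι K ((y l).map ρ) * 1 ⊗ₖ p := by
      have h1 := one_kronecker_mul_comp_mul 1 p ((y l).map ρ)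
      rw [one_kronecker_one, one_mul] at h1
      rw [one_kronecker_mul_comp_mul, h1, Matrix.map_map, Matrix.map_map]
      exact congrArg _ (Matrix.ext fun d e => by simp [hρ])
    rw [← cornerSum_one_kronecker_one_kronecker, ← h.blowUp_mul, ← cornerSum_one_kronecker_blowUp,
      ← cornerSum_mul_cornerSum (isIdempotentElem_one_kronecker hp) hQ hP,
      cornerSum_one_kronecker_comp]
    rfl

lemma IsCompatible.exists_cornerSumHom [IsAlgClosed K] [Nonempty δ] (h : IsCompatible T y x ρ)
    {U : Submodule K (ι → K)} (hU : ∀ a, U.map (ρ a).mulVecLin ≤ U) :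
    ∃ (p : Matrix ι ι K) (hp : IsIdempotentElem p) (hρ : ∀ a, p * ρ a * p = ρ a * p)
      (x' : σ → Matrix ι ι K), LinearMap.range p.mulVecLin = U ∧
        IsCompatible T y x' (cornerSumHom hp ρ hρ) ∧ ∀ F, IsSLInvariant F → F x' = F x := by
  obtain ⟨p, hp, rfl⟩ := exists_isIdempotentElem_range_mulVecLin_eq U
  obtain ⟨q, hq, hqU⟩ := exists_isIdempotentElem_range_mulVecLin_eq
    (⨆ l, (LinearMap.range p.mulVecLin).map (x l).mulVecLin)
  have hρ (a : 𝒜) : p * ρ a * p = ρ a * p := by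
    rw [mul_assoc]
    refine mul_eq_self_of_range_le hp ?_
    rw [mulVecLin_mul, LinearMap.range_comp]
    exact hU a
  have hx (l : σ) : q * x l * p = x l * p := by
    rw [mul_assoc]
    refine mul_eq_self_of_range_le hq ?_
    rw [hqU, mulVecLin_mul, LinearMap.range_comp]
    exact le_iSup (fun l => (LinearMap.range p.mulVecLin).map (x l).mulVecLin) l
  have hpq : p.rank = q.rank := by
    rw [Matrix.rank, Matrix.rank, hqU, h.finrank_iSup_map_eq hU]
  exact ⟨p, hp, hρ, _, rfl, h.cornerSum hp hq hpq hρ hx,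
    fun F hF => hF.map_diag_of_idempotent hp hq hpq hx⟩

lemma IsCompatible.exists_forall_mem_ideal_eq_zero [IsAlgClosed K] [Nonempty δ]
    (h : IsCompatible T y x ρ) {I : Ideal 𝒜} (hI : ∀ a ∈ I, ∀ b ∈ I, ρ (a * b) = 0) :
    ∃ (x' : σ → Matrix ι ι K) (ρ' : 𝒜 →ₐ[K] Matrix ι ι K), IsCompatible T y x' ρ' ∧
      (∀ F, IsSLInvariant F → F x' = F x) ∧ (∀ a, (ρ' a).det = (ρ a).det) ∧ ∀ a ∈ I, ρ' a = 0 := by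
  let U : Submodule K (ι → K) := ⨆ a ∈ I, LinearMap.range (ρ a).mulVecLin
  have hU (a : 𝒜) : U.map (ρ a).mulVecLin ≤ U := by
    simp only [U, Submodule.map_iSup, iSup_le_iff, ← LinearMap.range_comp, ← mulVecLin_mul,
      ← map_mul]
    exact fun b hb => le_iSup₂_of_le (a * b) (I.mul_mem_left a hb) le_rfl
  obtain ⟨p, hp, hρ, x', hpU, hx', hF⟩ := h.exists_cornerSumHom hU
  refine ⟨x', _, hx', hF, det_cornerSumHom hp hρ, fun a ha => ?_⟩
  have hpa : p * ρ a = ρ a := mul_eq_self_of_range_le hp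
    (hpU ▸ le_iSup₂_of_le (f := fun a _ => LinearMap.range (ρ a).mulVecLin) a ha le_rfl)
  have hker : U ≤ LinearMap.ker (ρ a).mulVecLin := iSup₂_le fun b hb => by
    rw [LinearMap.range_le_ker_iff, ← mulVecLin_mul, ← map_mul, hI a ha b hb, mulVecLin_zero]
  have hap : ρ a * p = 0 := by
    rw [← hpU, LinearMap.range_le_ker_iff, ← mulVecLin_mul] at hker
    exact toLin'.injective (hker.trans (map_zero _).symm)
  rw [cornerSumHom_apply, cornerSum_eq (hρ a), hap, sub_mul, one_mul, hpa, sub_self, add_zero]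

lemma IsCompatible.exists_forall_mem_jacobson_eq_zero [IsAlgClosed K] [Nonempty δ] (k : ℕ)
    (h : IsCompatible T y x ρ) (hk : ∀ a ∈ Ring.jacobson 𝒜 ^ (k + 1), ρ a = 0) :
    ∃ (x' : σ → Matrix ι ι K) (ρ' : 𝒜 →ₐ[K] Matrix ι ι K), IsCompatible T y x' ρ' ∧
      (∀ F, IsSLInvariant F → F x' = F x) ∧ (∀ a, (ρ' a).det = (ρ a).det) ∧
        ∀ a ∈ Ring.jacobson 𝒜, ρ' a = 0 := by
  induction k generalizing x ρ with
  | zero =>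
    exact ⟨x, ρ, h, fun _ _ => rfl, fun _ => rfl, by rwa [zero_add, Submodule.pow_one] at hk⟩
  | succ k ih =>
    obtain ⟨x₁, ρ₁, h₁, hF₁, hdet₁, hρ₁⟩ := h.exists_forall_mem_ideal_eq_zero
      (I := Ring.jacobson 𝒜 ^ (k + 1)) fun a ha b hb => hk _ <| by
        rw [Submodule.pow_succ]
        exact Ideal.mul_mem_mul ha (Ideal.pow_le_self k.succ_ne_zero hb)
    obtain ⟨x', ρ', h', hF', hdet', hρ'⟩ := ih h₁ hρ₁
    exact ⟨x', ρ', h', fun F hF => (hF' F hF).trans (hF₁ F hF),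
      fun a => (hdet' a).trans (hdet₁ a), hρ'⟩

end Compatible

section RepSpace

variable {ι K 𝒜 : Type*} [Fintype ι] [DecidableEq ι] [Field K] [Ring 𝒜] [Algebra K 𝒜]

/-- The space `ι → K` as a module over `𝒜` through the matrix representation `ρ`. -/
def RepSpace (_ρ : 𝒜 →ₐ[K] Matrix ι ι K) : Type _ := ι → K

variable (ρ : 𝒜 →ₐ[K] Matrix ι ι K)

instance : AddCommGroup (RepSpace ρ) := inferInstanceAs (AddCommGroup (ι → K))

instance : Module K (RepSpace ρ) := inferInstanceAs (Module K (ι → K))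

instance : FiniteDimensional K (RepSpace ρ) := inferInstanceAs (FiniteDimensional K (ι → K))

instance : Module 𝒜 (RepSpace ρ) :=
  Module.compHom (ι → K) (toLinAlgEquiv'.toAlgHom.comp ρ).toRingHom

lemma RepSpace.smul_def (a : 𝒜) (z : RepSpace ρ) : a • z = (ρ a *ᵥ z : ι → K) := rfl

instance : IsScalarTower K 𝒜 (RepSpace ρ) where
  smul_assoc c a z := by
    rw [RepSpace.smul_def, map_smul]
    exact smul_mulVec c (ρ a) z

lemma RepSpace.isSemisimpleModule [IsArtinianRing 𝒜] (h : ∀ a ∈ Ring.jacobson 𝒜, ρ a = 0) :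
    IsSemisimpleModule 𝒜 (RepSpace ρ) := by
  have htors : Module.IsTorsionBySet 𝒜 (RepSpace ρ) (Ring.jacobson 𝒜) := fun z a =>
    (congrArg (· *ᵥ z) (h a a.2)).trans (zero_mulVec z)
  let _ := htors.module
  exact htors.isSemisimpleModule_iff.1 inferInstance

lemma RepSpace.charpoly_lsmul (a : 𝒜) :
    (Algebra.lsmul K K (RepSpace ρ) a).charpoly = (ρ a).charpoly :=
  charpoly_toLin' (ρ a)

variable {ρ}

lemma exists_units_mul_eq_mul_of_det_eq [Infinite K] [IsArtinianRing 𝒜]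
    {ρ' : 𝒜 →ₐ[K] Matrix ι ι K}
    (h : ∀ a ∈ Ring.jacobson 𝒜, ρ a = 0) (h' : ∀ a ∈ Ring.jacobson 𝒜, ρ' a = 0)
    (hdet : ∀ a, (ρ a).det = (ρ' a).det) :
    ∃ φ : (Matrix ι ι K)ˣ, ∀ a, φ * ρ a = ρ' a * φ := by
  have hchar (a : 𝒜) : (ρ a).charpoly = (ρ' a).charpoly := by
    refine Polynomial.funext fun t => ?_
    have ht := hdet (algebraMap K 𝒜 t - a)
    rw [map_sub, map_sub, AlgHom.commutes, AlgHom.commutes] at ht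
    rw [eval_charpoly, eval_charpoly]
    exact ht
  have := RepSpace.isSemisimpleModule ρ h
  have := RepSpace.isSemisimpleModule ρ' h'
  obtain ⟨e⟩ := nonempty_linearEquiv_of_charpoly_lsmul_eq (K := K) (𝒜 := 𝒜) (V := RepSpace ρ)
    (W := RepSpace ρ') fun a => by rw [RepSpace.charpoly_lsmul, RepSpace.charpoly_lsmul, hchar a]
  let f : (ι → K) ≃ₗ[K] (ι → K) := e.restrictScalars K
  let φ : GL ι K := GeneralLinearGroup.toLin.symm (LinearMap.GeneralLinearGroup.ofLinearEquiv f)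
  have hφ (z : ι → K) : φ *ᵥ z = f z := by
    rw [← mulVecLin_apply, ← GeneralLinearGroup.coe_toLin, MulEquiv.apply_symm_apply]
    rfl
  refine ⟨φ, fun a => toLin'.injective (LinearMap.ext fun z => ?_)⟩
  rw [toLin'_apply, toLin'_apply, ← mulVec_mulVec, ← mulVec_mulVec, hφ, hφ]
  exact e.map_smul a z

end RepSpace

section Compatible

variable {σ δ ι K 𝒜 : Type*} [Fintype σ] [Fintype δ] [DecidableEq δ] [Fintype ι] [DecidableEq ι]
  [Field K] [Ring 𝒜] [Algebra K 𝒜] {T : σ → Matrix δ δ K} {y : σ → Matrix δ δ 𝒜}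
  {x z : σ → Matrix ι ι K} {ρ ρ' : 𝒜 →ₐ[K] Matrix ι ι K}

lemma one_kronecker_mul_comp_map_of_mul_eq_mul (Y : Matrix δ δ 𝒜) {φ : Matrix ι ι K}
    (hφ : ∀ a, φ * ρ a = ρ' a * φ) :
    1 ⊗ₖ φ * comp δ δ ι ι K (Y.map ρ) = comp δ δ ι ι K (Y.map ρ') * 1 ⊗ₖ φ := by
  have h1 := one_kronecker_mul_comp_mul φ 1 (Y.map ρ)
  have h2 := one_kronecker_mul_comp_mul 1 φ (Y.map ρ')
  rw [one_kronecker_one, mul_one] at h1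
  rw [one_kronecker_one, one_mul] at h2
  rw [h1, h2]
  exact congrArg _ (Matrix.ext fun d e => by simp [hφ])

lemma IsCompatible.exists_mul_eq_mul [Nonempty δ] (h : IsCompatible T y x ρ)
    (h' : IsCompatible T y z ρ') {φ : Matrix ι ι K} (hφ : ∀ a, φ * ρ a = ρ' a * φ) :
    ∃ A : Matrix ι ι K, ∀ l, A * x l = z l * φ := by
  obtain ⟨u, hu⟩ := h.isUnit_blowUp
  obtain ⟨d⟩ := ‹Nonempty δ›
  let Z := (comp δ δ ι ι K).symm (blowUp z T * 1 ⊗ₖ φ * (u⁻¹).val)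
  have hZ (l : σ) : comp δ δ ι ι K Z * 1 ⊗ₖ x l = 1 ⊗ₖ (z l * φ) := by
    rw [← h.blowUp_mul, Equiv.apply_symm_apply, mul_assoc, ← hu, u.inv_mul_cancel_left, mul_assoc,
      one_kronecker_mul_comp_map_of_mul_eq_mul _ hφ, ← mul_assoc, h'.blowUp_mul,
      ← mul_kronecker_mul, one_mul]
  refine ⟨Z d d, fun l => ?_⟩
  rw [← (comp δ δ ι ι K).symm_apply_apply Z, ← comp_symm_mul_one_kronecker, hZ,
    one_kronecker_eq_comp_diagonal, Equiv.symm_apply_apply, diagonal_apply_eq]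

lemma IsCompatible.exists_units_eq_mul_mul [Nonempty δ] (h : IsCompatible T y x ρ)
    (h' : IsCompatible T y z ρ') (φ : (Matrix ι ι K)ˣ) (hφ : ∀ a, φ * ρ a = ρ' a * φ) :
    ∃ A B : (Matrix ι ι K)ˣ, ∀ l, z l = A * x l * B := by
  obtain ⟨A, hA⟩ := h.exists_mul_eq_mul h' hφ
  have hdet := congrArg det (one_kronecker_mul_blowUp_eq_blowUp_mul_one_kronecker (T := T) hA)
  rw [det_mul, det_mul, det_kronecker, det_kronecker, det_one, one_pow, one_mul, one_mul] at hdet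
  have hAu : IsUnit A := by
    have hz := (isUnit_iff_isUnit_det _).1 h'.isUnit_blowUp
    have hφu := ((isUnit_iff_isUnit_det _).1 φ.isUnit).pow (Fintype.card δ)
    exact (isUnit_iff_isUnit_det _).2 ((isUnit_pow_iff Fintype.card_ne_zero).1
      (isUnit_of_mul_isUnit_left (hdet ▸ hz.mul hφu)))
  exact ⟨hAu.unit, φ⁻¹, fun l => (Units.eq_mul_inv_iff_mul_eq _).2 (hA l).symm⟩

theorem IsCompatible.exists_units_forall_isSLInvariant [IsAlgClosed K] [Nonempty δ]
    [IsArtinianRing 𝒜] (h : IsCompatible T y x ρ) (h' : IsCompatible T y z ρ')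
    (hdet : ∀ a, (ρ a).det = (ρ' a).det) :
    ∃ A B : (Matrix ι ι K)ˣ, ∀ F, IsSLInvariant F → F z = F fun l => A * x l * B := by
  obtain ⟨k, hk⟩ := IsSemiprimaryRing.isNilpotent (R := 𝒜)
  have hJ : ∀ a ∈ Ring.jacobson 𝒜 ^ (k + 1), a = 0 := fun a ha => by
    simpa [hk] using Ideal.pow_le_pow_right k.le_succ ha
  obtain ⟨x₁, ρ₁, h₁, hF₁, hdet₁, hρ₁⟩ := h.exists_forall_mem_jacobson_eq_zero k
    fun a ha => by rw [hJ a ha, map_zero]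
  obtain ⟨z₁, ρ₁', h₁', hF₁', hdet₁', hρ₁'⟩ := h'.exists_forall_mem_jacobson_eq_zero k
    fun a ha => by rw [hJ a ha, map_zero]
  have := IsAlgClosed.instInfinite (K := K)
  obtain ⟨φ, hφ⟩ := exists_units_mul_eq_mul_of_det_eq hρ₁ hρ₁' fun a => by
    rw [hdet₁, hdet₁', hdet]
  obtain ⟨A, B, hAB⟩ := h₁.exists_units_eq_mul_mul h₁' φ hφ
  refine ⟨A, B, fun F hF => ?_⟩
  rw [← hF₁' F hF, funext hAB]
  exact hF₁ _ (hF.comp_mul_mul A B)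

end Compatible

section Homogeneous

variable {τ R ι : Type*} [CommRing R] [Fintype ι] [DecidableEq ι]
  {M : Matrix ι ι (MvPolynomial τ R)}

lemma isHomogeneous_det_of_forall_row {d : ι → ℕ} (hM : ∀ i j, (M i j).IsHomogeneous (d i)) :
    M.det.IsHomogeneous (∑ i, d i) := by
  rw [det_apply]
  refine IsHomogeneous.sum _ _ _ fun π _ => ?_
  rw [Units.smul_def, ← mem_homogeneousSubmodule, ← Equiv.sum_comp π]
  exact zsmul_mem (IsHomogeneous.prod _ _ _ fun i _ => hM (π i) i) _

lemma isHomogeneous_det {d : ℕ} (hM : ∀ i j, (M i j).IsHomogeneous d) :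
    M.det.IsHomogeneous (Fintype.card ι * d) := by
  simpa using isHomogeneous_det_of_forall_row hM

lemma isHomogeneous_adjugate {d : ℕ} (hM : ∀ i j, (M i j).IsHomogeneous d) (i j : ι) :
    (M.adjugate i j).IsHomogeneous ((Fintype.card ι - 1) * d) := by
  have hrow : (M.updateRow j (Pi.single i 1)).det.IsHomogeneous (∑ k, if k = j then 0 else d) := by
    refine isHomogeneous_det_of_forall_row fun k l => ?_
    split_ifs with hkj
    · rw [hkj, updateRow_self]
      rcases eq_or_ne l i with rfl | hl
      · rw [Pi.single_eq_same]
        exact isHomogeneous_one _ _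
      · rw [Pi.single_eq_of_ne hl]
        exact isHomogeneous_zero _ _ _
    · rw [updateRow_ne hkj]
      exact hM k l
  rw [adjugate_apply]
  simpa [Finset.sum_ite, Finset.filter_ne', Finset.card_erase_of_mem] using hrow

end Homogeneous

section PowStable

variable {K E : Type*} [Field K] [Ring E] [Algebra K E] [FiniteDimensional K E]

lemma pow_eq_pow_finrank_of_one_mem {Y : Submodule K E} (hY : 1 ∈ Y) {L : ℕ}
    (hL : Module.finrank K E ≤ L) : Y ^ L = Y ^ Module.finrank K E := by
  have hmono : Monotone (Y ^ · : ℕ → Submodule K E) :=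
    fun _ _ h => pow_le_pow_right₀ (Submodule.one_le.2 hY) h
  refine (Submodule.eq_of_le_of_finrank_eq (hmono hL) (Nat.stabilises_of_monotone
    (f := fun k => Module.finrank K ↥(Y ^ k)) (fun _ _ h => Submodule.finrank_mono (hmono h))
    (fun k => Submodule.finrank_le _) (fun k hk => ?_) hL).symm).symm
  have hk' : Y ^ k = Y ^ (k + 1) := Submodule.eq_of_le_of_finrank_eq (hmono k.le_succ) hk
  rw [pow_succ Y (k + 1), ← hk', ← pow_succ]
  exact hk

lemma exists_subalgebra_toSubmodule_eq_pow {Y : Submodule K E} (hY : 1 ∈ Y) {L : ℕ}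
    (hL : Module.finrank K E ≤ L) : ∃ 𝒜 : Subalgebra K E, 𝒜.toSubmodule = Y ^ L := by
  refine ⟨(Y ^ L).toSubalgebra (Submodule.one_le.1 (one_le_pow₀ (Submodule.one_le.2 hY)))
    fun a b ha hb => ?_, Submodule.toSubalgebra_toSubmodule _ _ _⟩
  rw [pow_eq_pow_finrank_of_one_mem hY hL,
    ← pow_eq_pow_finrank_of_one_mem hY (hL.trans (Nat.le_add_right L L)), pow_add]
  exact Submodule.mul_mem_mul ha hb

end PowStable

section Generic

variable {K : Type} [Field K] {n m : ℕ}

theorem isSLInvariant_aeval_matCoords_iff {f : MvPolynomial (Fin m × Fin n × Fin n) K} :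
    IsSLInvariant (fun x : Fin m → Matrix (Fin n) (Fin n) K => aeval (matCoords x) f) ↔
      f ∈ matrixSemiInvariants K n m := by
  simp only [matrixSemiInvariants, Algebra.mem_iInf, AlgHom.mem_equalizer]
  refine ⟨fun hf A B x => hf.map_mul_mul A.2 (B⁻¹).2 x, fun hf => ⟨fun {A B} hA hB x => ?_, ?_⟩⟩
  · let B' : SpecialLinearGroup (Fin n) K := ⟨B, hB⟩
    have hAB := hf ⟨A, hA⟩ B'⁻¹ x
    rwa [inv_inv] at hAB
  · intro X
    refine ⟨aeval (fun p => X p.1 p.2.1 p.2.2) f, fun s => ?_⟩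
    rw [← Polynomial.coe_aeval_eq_eval, comp_aeval_apply]
    rfl

/-- The tuple of generic matrices, whose entries are the coordinate functions on tuples. -/
noncomputable def genericTuple (K : Type) [Field K] (n m : ℕ) :
    Fin m → Matrix (Fin n) (Fin n) (MvPolynomial (Fin m × Fin n × Fin n) K) :=
  fun l => of fun i j => X (l, i, j)

/-- Evaluation at the tuple `x` of matrices of polynomial functions of a tuple. -/
noncomputable def evalMatrix (ι : Type*) [Fintype ι] [DecidableEq ι]
    (x : Fin m → Matrix (Fin n) (Fin n) K) :
    Matrix ι ι (MvPolynomial (Fin m × Fin n × Fin n) K) →ₐ[K] Matrix ι ι K :=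
  (aeval (matCoords x)).mapMatrix

lemma det_evalMatrix {ι : Type*} [Fintype ι] [DecidableEq ι] (x : Fin m → Matrix (Fin n) (Fin n) K)
    (M : Matrix ι ι (MvPolynomial (Fin m × Fin n × Fin n) K)) :
    (evalMatrix ι x M).det = aeval (matCoords x) M.det :=
  ((aeval (matCoords x)).map_det M).symm

variable {δ : Type*} [Fintype δ] [DecidableEq δ] (T : Fin m → Matrix δ δ K)

/-- The blow-up at `T` of the tuple of generic matrices. -/
noncomputable def genericBlowUp (n : ℕ) :
    Matrix (δ × Fin n) (δ × Fin n) (MvPolynomial (Fin m × Fin n × Fin n) K) :=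
  blowUp (genericTuple K n m) fun l => (T l).map C

lemma evalMatrix_genericBlowUp (x : Fin m → Matrix (Fin n) (Fin n) K) :
    evalMatrix (δ × Fin n) x (genericBlowUp T n) = blowUp x T := by
  ext
  simp [evalMatrix, genericBlowUp, blowUp_apply, genericTuple, matCoords]

omit [Fintype δ] [DecidableEq δ] in
lemma isHomogeneous_genericBlowUp (p q : δ × Fin n) : (genericBlowUp T n p q).IsHomogeneous 1 := by
  rw [genericBlowUp, blowUp_apply]
  exact IsHomogeneous.sum _ _ _ fun l _ => isHomogeneous_C_mul_X _ _

lemma aeval_det_genericBlowUp (x : Fin m → Matrix (Fin n) (Fin n) K) :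
    aeval (matCoords x) (genericBlowUp T n).det = (blowUp x T).det := by
  rw [← det_evalMatrix, evalMatrix_genericBlowUp]

lemma isHomogeneous_det_genericBlowUp :
    (genericBlowUp T n).det.IsHomogeneous (Fintype.card δ * n) := by
  simpa using isHomogeneous_det (isHomogeneous_genericBlowUp (n := n) T)

lemma det_genericBlowUp_mem_matrixSemiInvariants :
    (genericBlowUp T n).det ∈ matrixSemiInvariants K n m := by
  rw [← isSLInvariant_aeval_matCoords_iff, funext (aeval_det_genericBlowUp T)]
  exact isSLInvariant_det_blowUp T

end Generic

section Covariants

variable {K : Type} [Field K] {n m : ℕ}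

variable (K n m) in
/-- The space of homogeneous covariants of degree `e`: the matrices `Φ` of polynomials of degree `e`
in the entries of a tuple `x` with `Φ (A * x * B) = B⁻¹ * Φ x * B` for `A` and `B` of determinant
one. -/
def covariants (e : ℕ) :
    Submodule K (Matrix (Fin n) (Fin n) (MvPolynomial (Fin m × Fin n × Fin n) K)) where
  carrier := {Φ | (∀ i j, (Φ i j).IsHomogeneous e) ∧
    ∀ (A B : Matrix (Fin n) (Fin n) K), A.det = 1 → B.det = 1 → ∀ x,
      B * evalMatrix (Fin n) (fun l => A * x l * B) Φ = evalMatrix (Fin n) x Φ * B}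
  add_mem' hΦ hΨ := ⟨fun i j => (hΦ.1 i j).add (hΨ.1 i j), fun A B hA hB x => by
    rw [map_add, map_add, mul_add, add_mul, hΦ.2 A B hA hB, hΨ.2 A B hA hB]⟩
  zero_mem' := ⟨fun _ _ => isHomogeneous_zero _ _ _, fun A B _ _ x => by simp⟩
  smul_mem' c Φ hΦ := ⟨fun i j => (homogeneousSubmodule _ K e).smul_mem c (hΦ.1 i j),
    fun A B hA hB x => by
      rw [map_smul, map_smul, mul_smul_comm, smul_mul_assoc, hΦ.2 A B hA hB]⟩

lemma mul_mem_covariants {d e : ℕ}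
    {Φ Ψ : Matrix (Fin n) (Fin n) (MvPolynomial (Fin m × Fin n × Fin n) K)}
    (hΦ : Φ ∈ covariants K n m d) (hΨ : Ψ ∈ covariants K n m e) :
    Φ * Ψ ∈ covariants K n m (d + e) := by
  refine ⟨fun i j => ?_, fun A B hA hB x => ?_⟩
  · rw [mul_apply]
    exact IsHomogeneous.sum _ _ _ fun k _ => (hΦ.1 i k).mul (hΨ.1 k j)
  · rw [map_mul, map_mul, ← mul_assoc, hΦ.2 A B hA hB, mul_assoc, hΨ.2 A B hA hB, mul_assoc]

lemma evalMatrix_smul_one (f : MvPolynomial (Fin m × Fin n × Fin n) K)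
    (x : Fin m → Matrix (Fin n) (Fin n) K) :
    evalMatrix (Fin n) x (f • 1) = aeval (matCoords x) f • 1 := by
  ext i j
  by_cases hij : i = j <;> simp [evalMatrix, hij]

lemma smul_one_mem_covariants {e : ℕ} {f : MvPolynomial (Fin m × Fin n × Fin n) K}
    (hf : f ∈ matrixSemiInvariants K n m) (he : f.IsHomogeneous e) :
    f • 1 ∈ covariants K n m e := by
  refine ⟨fun i j => ?_, fun A B hA hB x => ?_⟩
  · by_cases hij : i = j <;> simp [hij, he, isHomogeneous_zero]
  · have hinv := (isSLInvariant_aeval_matCoords_iff.2 hf).map_mul_mul hA hB x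
    rw [evalMatrix_smul_one, evalMatrix_smul_one, hinv, mul_smul_comm, smul_mul_assoc, mul_one,
      one_mul]

lemma covariants_pow_le (e L : ℕ) : covariants K n m e ^ L ≤ covariants K n m (L * e) := by
  induction L with
  | zero =>
    rw [pow_zero, Submodule.one_le, zero_mul]
    simpa using smul_one_mem_covariants (one_mem (matrixSemiInvariants K n m))
      (isHomogeneous_one _ _)
  | succ L ih =>
    rw [pow_succ, Submodule.mul_le, add_mul, one_mul]
    exact fun Φ hΦ Ψ hΨ => mul_mem_covariants (ih hΦ) hΨ

lemma det_mem_matrixSemiInvariants {e : ℕ}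
    {Φ : Matrix (Fin n) (Fin n) (MvPolynomial (Fin m × Fin n × Fin n) K)}
    (hΦ : Φ ∈ covariants K n m e) : Φ.det ∈ matrixSemiInvariants K n m := by
  simp only [matrixSemiInvariants, Algebra.mem_iInf, AlgHom.mem_equalizer]
  intro A B x
  have hdet := congrArg det (hΦ.2 A (B⁻¹).val A.2 (B⁻¹).2 x)
  rwa [det_mul, det_mul, (B⁻¹).2, one_mul, mul_one, det_evalMatrix, det_evalMatrix] at hdet

variable {δ : Type*} [Fintype δ] [DecidableEq δ] (T : Fin m → Matrix δ δ K)

/-- The `δ × δ` block matrix of covariants which, at a tuple `x`, is a scalar multiple of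
`(blowUp x T)⁻¹ * (1 ⊗ₖ x l)`. -/
noncomputable def blockCovariant (n : ℕ) (l : Fin m) :
    Matrix (δ × Fin n) (δ × Fin n) (MvPolynomial (Fin m × Fin n × Fin n) K) :=
  (genericBlowUp T n).adjugate * 1 ⊗ₖ genericTuple K n m l

lemma evalMatrix_blockCovariant (x : Fin m → Matrix (Fin n) (Fin n) K) (l : Fin m) :
    evalMatrix (δ × Fin n) x (blockCovariant T n l) = (blowUp x T).adjugate * 1 ⊗ₖ x l := by
  have hone : evalMatrix (δ × Fin n) x (1 ⊗ₖ genericTuple K n m l) = 1 ⊗ₖ x l := by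
    ext ⟨d, i⟩ ⟨e, j⟩
    by_cases hde : d = e <;> simp [evalMatrix, genericTuple, matCoords, hde]
  rw [blockCovariant, map_mul, hone, ← evalMatrix_genericBlowUp]
  exact congrArg (· * _) (RingHom.map_adjugate (aeval (R := K) (matCoords x)).toRingHom _)

lemma isHomogeneous_blockCovariant (hn : 0 < n) [Nonempty δ] (l : Fin m) (p q : δ × Fin n) :
    (blockCovariant T n l p q).IsHomogeneous (Fintype.card δ * n) := by
  rw [blockCovariant, mul_apply]
  refine IsHomogeneous.sum _ _ _ fun k _ => ?_
  have hadj := isHomogeneous_adjugate (isHomogeneous_genericBlowUp (n := n) T) p k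
  have hcoord : ((1 ⊗ₖ genericTuple K n m l : Matrix (δ × Fin n) (δ × Fin n) _) k q).IsHomogeneous
      1 := by
    rw [kroneckerMap_apply, one_apply, ite_mul, one_mul, zero_mul]
    split_ifs
    · exact isHomogeneous_X _ _
    · exact isHomogeneous_zero _ _ _
  have hdeg : (Fintype.card (δ × Fin n) - 1) * 1 + 1 = Fintype.card δ * n := by
    rw [mul_one, Fintype.card_prod, Fintype.card_fin]
    exact Nat.sub_add_cancel (Nat.mul_pos Fintype.card_pos hn)
  exact hdeg ▸ hadj.mul hcoord

lemma comp_symm_blockCovariant_mem_covariants (hn : 0 < n) (l : Fin m) (d e : δ) :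
    (comp δ δ (Fin n) (Fin n) _).symm (blockCovariant T n l) d e ∈
      covariants K n m (Fintype.card δ * n) := by
  have : Nonempty δ := ⟨d⟩
  refine ⟨fun i j => isHomogeneous_blockCovariant T hn l (d, i) (e, j), fun A B hA hB x => ?_⟩
  have hblock : 1 ⊗ₖ B * evalMatrix (δ × Fin n) (fun l => A * x l * B) (blockCovariant T n l) =
      evalMatrix (δ × Fin n) x (blockCovariant T n l) * 1 ⊗ₖ B := by
    have hkron : (1 : Matrix δ δ K) ⊗ₖ (A * x l * B) = 1 ⊗ₖ A * 1 ⊗ₖ x l * 1 ⊗ₖ B := by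
      simp only [← mul_kronecker_mul, one_mul]
    rw [evalMatrix_blockCovariant, evalMatrix_blockCovariant, hkron, ← mul_assoc, ← mul_assoc,
      ← mul_assoc, one_kronecker_mul_adjugate_blowUp_mul hA hB]
  exact (comp_symm_one_kronecker_mul B _ d e).symm.trans
    ((congrArg (fun M => (comp δ δ (Fin n) (Fin n) K).symm M d e) hblock).trans
      (comp_symm_mul_one_kronecker B _ d e))

end Covariants

section EvalPair

variable {K : Type} [Field K] {n m : ℕ} (v w : Fin m → Matrix (Fin n) (Fin n) K)

/-- Simultaneous evaluation at the tuples `v` and `w` of matrices of polynomial functions. -/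
noncomputable def evalPair :
    Matrix (Fin n) (Fin n) (MvPolynomial (Fin m × Fin n × Fin n) K) →ₐ[K]
      Matrix (Fin n) (Fin n) K × Matrix (Fin n) (Fin n) K :=
  (evalMatrix (Fin n) v).prod (evalMatrix (Fin n) w)

variable {v w}

lemma one_mem_map_evalPair_covariants {e : ℕ} {f : MvPolynomial (Fin m × Fin n × Fin n) K}
    (hf : f ∈ matrixSemiInvariants K n m) (he : f.IsHomogeneous e)
    (hv : aeval (matCoords v) f ≠ 0) (hvw : aeval (matCoords v) f = aeval (matCoords w) f) :
    1 ∈ (covariants K n m e).map (evalPair v w).toLinearMap := by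
  refine ⟨(aeval (matCoords v) f)⁻¹ • f • 1,
    Submodule.smul_mem _ _ (smul_one_mem_covariants hf he), ?_⟩
  rw [AlgHom.toLinearMap_apply, map_smul, evalPair, AlgHom.prod_apply, evalMatrix_smul_one,
    evalMatrix_smul_one, ← hvw, ← Prod.mk_one_one, ← Prod.smul_mk, inv_smul_smul₀ hv]

lemma exists_subalgebra_of_one_mem_map_evalPair (hn : 2 ≤ n) {e : ℕ}
    (hone : 1 ∈ (covariants K n m e).map (evalPair v w).toLinearMap) :
    ∃ 𝒜 : Subalgebra K (Matrix (Fin n) (Fin n) K × Matrix (Fin n) (Fin n) K),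
      (∀ Φ ∈ covariants K n m e, evalPair v w Φ ∈ 𝒜) ∧
        ∀ a ∈ 𝒜, ∃ Φ ∈ covariants K n m (n ^ 3 * e), evalPair v w Φ = a := by
  have hfinrank : Module.finrank K (Matrix (Fin n) (Fin n) K × Matrix (Fin n) (Fin n) K) ≤
      n ^ 3 := by
    rw [Module.finrank_prod, Module.finrank_matrix, Module.finrank_self, Fintype.card_fin]
    nlinarith
  obtain ⟨𝒜, h𝒜⟩ := exists_subalgebra_toSubmodule_eq_pow hone hfinrank
  refine ⟨𝒜, fun Φ hΦ => ?_, fun a ha => ?_⟩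
  · rw [← Subalgebra.mem_toSubmodule, h𝒜]
    have hle := pow_le_pow_right₀ (Submodule.one_le.2 hone) (Nat.one_le_pow 3 n (by omega))
    rw [pow_one] at hle
    exact hle ⟨Φ, hΦ, rfl⟩
  · rw [← Subalgebra.mem_toSubmodule, h𝒜, ← Submodule.map_pow] at ha
    obtain ⟨Φ, hΦ, rfl⟩ := ha
    exact ⟨Φ, covariants_pow_le _ _ hΦ, rfl⟩

variable {δ : Type*} [Fintype δ] [DecidableEq δ] {T : Fin m → Matrix δ δ K}

lemma evalMatrix_inv_smul_comp_symm_blockCovariant (x : Fin m → Matrix (Fin n) (Fin n) K)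
    (l : Fin m) (d e : δ) :
    evalMatrix (Fin n) x
        ((blowUp x T).det⁻¹ • (comp δ δ (Fin n) (Fin n) _).symm (blockCovariant T n l) d e) =
      (comp δ δ (Fin n) (Fin n) K).symm ((blowUp x T)⁻¹ * 1 ⊗ₖ x l) d e := by
  rw [map_smul, inv_def, Ring.inverse_eq_inv', smul_mul_assoc, ← evalMatrix_blockCovariant]
  rfl

theorem exists_units_forall_isSLInvariant_of_det_covariants_eq [IsAlgClosed K] [Nonempty δ]
    (hn : 2 ≤ n) (hT : (blowUp v T).det ≠ 0) (hvw : (blowUp v T).det = (blowUp w T).det)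
    (hdet : ∀ Φ ∈ covariants K n m (n ^ 3 * (Fintype.card δ * n)),
      (evalMatrix (Fin n) v Φ).det = (evalMatrix (Fin n) w Φ).det) :
    ∃ A B : (Matrix (Fin n) (Fin n) K)ˣ, ∀ F, IsSLInvariant F → F w = F fun l => A * v l * B := by
  have hone := one_mem_map_evalPair_covariants (v := v) (w := w)
    (det_genericBlowUp_mem_matrixSemiInvariants T) (isHomogeneous_det_genericBlowUp T)
    (by rwa [aeval_det_genericBlowUp]) (by rwa [aeval_det_genericBlowUp, aeval_det_genericBlowUp])
  obtain ⟨𝒜, hmem, hlift⟩ := exists_subalgebra_of_one_mem_map_evalPair hn hone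
  let y (l : Fin m) : Matrix δ δ 𝒜 := of fun d e =>
    ⟨evalPair v w ((blowUp v T).det⁻¹ •
        (comp δ δ (Fin n) (Fin n) _).symm (blockCovariant T n l) d e),
      hmem _ (Submodule.smul_mem _ _
        (comp_symm_blockCovariant_mem_covariants T (by omega) l d e))⟩
  have hv : IsCompatible T y v ((AlgHom.fst K _ _).comp 𝒜.val) :=
    isCompatible_of_eq_inv_mul hT.isUnit fun l => funext fun d => funext fun e =>
      evalMatrix_inv_smul_comp_symm_blockCovariant v l d e
  have hw : IsCompatible T y w ((AlgHom.snd K _ _).comp 𝒜.val) :=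
    isCompatible_of_eq_inv_mul (hvw ▸ hT.isUnit) fun l => funext fun d => funext fun e => by
      rw [← evalMatrix_inv_smul_comp_symm_blockCovariant, ← hvw]
      rfl
  have := IsArtinianRing.of_finite K 𝒜
  refine hv.exists_units_forall_isSLInvariant hw fun a => ?_
  obtain ⟨Φ, hΦ, ha⟩ := hlift a a.2
  have hfst := congrArg (fun X => X.1.det) ha
  have hsnd := congrArg (fun X => X.2.det) ha
  exact hfst.symm.trans ((hdet Φ hΦ).trans hsnd)

end EvalPair

section Separation

section DetMulDet

variable {σ ι K : Type*} [Fintype σ] [Fintype ι] [DecidableEq ι] [Field K] {A B : Matrix ι ι K}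
  {x : σ → Matrix ι ι K}

lemma det_mul_det_pow_card_eq_one {δ : Type*} [Fintype δ] [DecidableEq δ] {T : σ → Matrix δ δ K}
    (hT : (blowUp x T).det ≠ 0)
    (hAB : (blowUp (fun l => A * x l * B) T).det = (blowUp x T).det) :
    (A.det * B.det) ^ Fintype.card δ = 1 := by
  rw [← one_kronecker_mul_blowUp_mul, det_mul, det_mul, det_kronecker, det_kronecker, det_one,
    one_pow, one_mul, one_mul, mul_right_comm, ← mul_pow] at hAB
  exact mul_right_cancel₀ hT (hAB.trans (one_mul _).symm)

lemma NoShrunkSubspace.exists_det_blowUp_ne_zero [Infinite K] [Nonempty ι]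
    (hx : NoShrunkSubspace x) {d : ℕ} (hd : Fintype.card ι ≤ d) :
    ∃ T : σ → Matrix (Fin d) (Fin d) K, (blowUp x T).det ≠ 0 := by
  obtain ⟨T, hT⟩ := hx.hasInvertibleBlowUp (Fintype.card_pos.trans_le hd) hd
  exact ⟨T, ((isUnit_iff_isUnit_det _).1 hT).ne_zero⟩

lemma NoShrunkSubspace.det_mul_det_eq_one [Infinite K] [Nonempty ι] (hx : NoShrunkSubspace x)
    (hAB : ∀ d ≤ Fintype.card ι + 1, ∀ T : σ → Matrix (Fin d) (Fin d) K,
      (blowUp (fun l => A * x l * B) T).det = (blowUp x T).det) :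
    A.det * B.det = 1 := by
  have hpow (d : ℕ) (hd : Fintype.card ι ≤ d) (hd' : d ≤ Fintype.card ι + 1) :
      (A.det * B.det) ^ d = 1 := by
    obtain ⟨T, hT⟩ := hx.exists_det_blowUp_ne_zero hd
    simpa only [Fintype.card_fin] using det_mul_det_pow_card_eq_one hT (hAB d hd' T)
  have hsucc := hpow _ (Nat.le_succ _) le_rfl
  rwa [pow_succ, hpow _ le_rfl (Nat.le_succ _), one_mul] at hsucc

end DetMulDet

variable {K : Type} [Field K] {n m : ℕ} {v w : Fin m → Matrix (Fin n) (Fin n) K}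

theorem IsSLInvariant.eq_of_noShrunkSubspace [IsAlgClosed K] (hn : 2 ≤ n)
    (hv : NoShrunkSubspace v)
    (h : ∀ g ∈ matrixSemiInvariants K n m, ∀ d ≤ n ^ 6, g.IsHomogeneous d →
      aeval (matCoords v) g = aeval (matCoords w) g)
    {F : (Fin m → Matrix (Fin n) (Fin n) K) → K} (hF : IsSLInvariant F) : F v = F w := by
  have := IsAlgClosed.instInfinite (K := K)
  have : Nonempty (Fin n) := ⟨⟨0, by omega⟩⟩
  have hblow (d : ℕ) (hd : d ≤ n + 1) (T : Fin m → Matrix (Fin d) (Fin d) K) :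
      (blowUp v T).det = (blowUp w T).det := by
    have hdn : Fintype.card (Fin d) * n ≤ n ^ 6 := by
      calc Fintype.card (Fin d) * n ≤ n ^ 2 * n ^ 1 := by
            rw [Fintype.card_fin]
            nlinarith
        _ = n ^ 3 := by ring
        _ ≤ n ^ 6 := Nat.pow_le_pow_right (by omega) (by omega)
    simpa only [aeval_det_genericBlowUp] using
      h _ (det_genericBlowUp_mem_matrixSemiInvariants T) _ hdn (isHomogeneous_det_genericBlowUp T)
  have hcov (Φ) (hΦ : Φ ∈ covariants K n m (n ^ 3 * (Fintype.card (Fin n) * n))) :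
      (evalMatrix (Fin n) v Φ).det = (evalMatrix (Fin n) w Φ).det := by
    rw [det_evalMatrix, det_evalMatrix]
    refine h _ (det_mem_matrixSemiInvariants hΦ) _ (le_of_eq ?_) (isHomogeneous_det hΦ.1)
    rw [Fintype.card_fin]
    ring
  obtain ⟨T, hT⟩ := hv.exists_det_blowUp_ne_zero (Fintype.card_fin n).le
  obtain ⟨A, B, hAB⟩ := exists_units_forall_isSLInvariant_of_det_covariants_eq hn hT
    (hblow n n.le_succ T) hcov
  have hone := hv.det_mul_det_eq_one (A := A) (B := B) fun d hd T => by
    rw [hblow d (by simpa using hd) T]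
    exact (hAB _ (isSLInvariant_det_blowUp T)).symm
  exact ((hAB F hF).trans (hF.map_mul_mul_of_det_mul_det hone v)).symm

lemma mem_matrixSemiInvariants_one (f : MvPolynomial (Fin m × Fin 1 × Fin 1) K) :
    f ∈ matrixSemiInvariants K 1 m := by
  simp only [matrixSemiInvariants, Algebra.mem_iInf, AlgHom.mem_equalizer]
  intro A B x
  rw [Subsingleton.elim A 1, Subsingleton.elim B 1]
  simp

end Separation

/-- The homogeneous elements of degree `≤ n^6` in `R(n,m)` form a separating
subset: any two points of `Mat_{n,n}^m` separated by some semi-invariant are separated by a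
homogeneous semi-invariant of degree `≤ n^6`. -/
theorem stmt_7 (K : Type) [Field K] [IsAlgClosed K] (n m : ℕ) (hn : 0 < n) (hm : 0 < m)
    (v w : Fin m → Matrix (Fin n) (Fin n) K)
    (hvw : ∃ f ∈ matrixSemiInvariants K n m, aeval (matCoords v) f ≠ aeval (matCoords w) f) :
    ∃ g ∈ matrixSemiInvariants K n m, (∃ d ≤ n ^ 6, g.IsHomogeneous d) ∧
      aeval (matCoords v) g ≠ aeval (matCoords w) g := by
  obtain ⟨f, hf, hne⟩ := hvw
  obtain rfl | hn2 := Nat.eq_or_lt_of_le hn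
  · obtain ⟨p, hp⟩ := Function.ne_iff.1 fun h : matCoords v = matCoords w => hne (by rw [h])
    exact ⟨X p, mem_matrixSemiInvariants_one _, ⟨1, by norm_num, isHomogeneous_X _ _⟩, by simpa⟩
  by_contra! h
  have hF := isSLInvariant_aeval_matCoords_iff.2 hf
  have hagree (g) (hg : g ∈ matrixSemiInvariants K n m) (d) (hd : d ≤ n ^ 6)
      (hgd : g.IsHomogeneous d) := h g hg ⟨d, hd, hgd⟩
  by_cases hv : NoShrunkSubspace v
  · exact hne (hF.eq_of_noShrunkSubspace hn2 hv hagree)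
  by_cases hw : NoShrunkSubspace w
  · exact hne (hF.eq_of_noShrunkSubspace hn2 hw fun g hg d hd hgd =>
      (hagree g hg d hd hgd).symm).symm
  · exact hne ((hF.eq_map_zero_of_not_noShrunkSubspace hv).trans
      (hF.eq_map_zero_of_not_noShrunkSubspace hw).symm)
end
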